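/- arXiv:1807.11465 — 3 statements merged into one kernel-verified Lean document; each statement's English description precedes it below -/
import Mathlib

section
/- Let Σ = (Γ, σ) be a signed simple graph with Δ(Σ) even. If the set of vertices of Γ having degree Δ(Σ) is an independent set, then Σ admits a proper edge coloring with Δ(Σ) colors. -/
open SimpleGraph

/-- The signed color set `M_n`: for `n = 2k+1` it is `{0, ±1, …, ±k}`,
and for `n = 2k` it is `{±1, …, ±k}`. -/
def Mset (n : ℕ) : Set ℤ :=
  {a : ℤ | 2 * a.natAbs ≤ n ∧ (a = 0 → Odd n)}

/-- An `n`-edge coloring of the signed graph `(G, σ)`: an assignment of colors from `Mset n`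
to the incidences of `G` such that `γ(v,e) = -σ(e)·γ(w,e)` for each edge `e : vw`. -/
structure SColoring {V : Type*} (G : SimpleGraph V) (σ : Sym2 V → ℤ) (n : ℕ) where
  col : V → Sym2 V → ℤ
  mem_colors : ∀ ⦃v w : V⦄, G.Adj v w → col v s(v, w) ∈ Mset n
  compat : ∀ ⦃v w : V⦄, G.Adj v w → col v s(v, w) = -σ s(v, w) * col w s(v, w)

namespace SColoring

variable {V : Type*} {G : SimpleGraph V} {σ : Sym2 V → ℤ} {n : ℕ}

/-- A coloring is proper if distinct edges incident to a common vertex receive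
distinct colors at that vertex. -/
def Proper (c : SColoring G σ n) : Prop :=
  ∀ ⦃v w x : V⦄, G.Adj v w → G.Adj v x → w ≠ x → c.col v s(v, w) ≠ c.col v s(v, x)

/-- A coloring is zero-free if the color `0` is never used. -/
def ZeroFree (c : SColoring G σ n) : Prop :=
  ∀ ⦃v w : V⦄, G.Adj v w → c.col v s(v, w) ≠ 0

/-- The color `a` is absent at the vertex `v` if no edge incident to `v` is
colored `a` at `v`. -/
def Absent (c : SColoring G σ n) (a : ℤ) (v : V) : Prop :=
  ∀ ⦃w : V⦄, G.Adj v w → c.col v s(v, w) ≠ a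

end SColoring

/-!
Remove an edge at a vertex `v` all of whose neighbors have degree less than `n`, color the rest by
induction, and recover the color of the removed edge by Vizing's fan argument. Switching suitable
neighbors of `v` makes every edge at `v` negative, so that its two incidences have the same color
and the colors can be shifted along a fan at `v` as in the unsigned case.

Kempe chains are taken on incidences rather than edges. Crossing an edge and exchanging two colors
are both involutions of the set of incidences, and in an orbit of the group they generate at most
two incidences carry a color absent at their vertex: a chain has at most two ends. As an exchange of
`x` and `y` also exchanges `-x` and `-y`, the classical argument applies to a fan without opposite
colors. If `α` is missing at `v`, an exchange along a fan with two opposite colors makes `-α`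
missing at one of its vertices, to which the uncolored edge is then shifted. An uncolored edge
missing `α` at `v` and `-α` at its other end is colored by a second fan argument.
-/

section DihedralOrbit

variable {X : Type*} {A B : Equiv.Perm X} {p q r : X}

lemma mul_zpow_mul_of_involutive (hA : Function.Involutive A) (hB : Function.Involutive B)
    (n : ℤ) : B * (B * A) ^ n = (B * A) ^ (-n) * B := by
  have hA' : A * A = 1 := Equiv.ext hA
  have hB' : B * B = 1 := Equiv.ext hB
  have hconj : SemiconjBy B (B * A) (B * A)⁻¹ := by
    rw [SemiconjBy, mul_inv_rev, inv_eq_of_mul_eq_one_left hA', inv_eq_of_mul_eq_one_left hB',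
      ← mul_assoc, hB', mul_assoc, hB', one_mul, mul_one]
  rw [zpow_neg, ← inv_zpow]
  exact hconj.zpow_right n

lemma sameCycle_mul_apply_left (hA : Function.Involutive A) (hB : Function.Involutive B)
    (hp : B p = p) (h : (B * A).SameCycle p q) : (B * A).SameCycle p (B q) := by
  obtain ⟨n, rfl⟩ := h
  refine ⟨-n, ?_⟩
  simpa only [Equiv.Perm.mul_apply, hp] using
    (congrArg (· p) (mul_zpow_mul_of_involutive hA hB n)).symm

lemma sameCycle_mul_apply_right (hA : Function.Involutive A) (hB : Function.Involutive B)
    (hp : B p = p) (h : (B * A).SameCycle p q) : (B * A).SameCycle p (A q) := by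
  have h' := sameCycle_mul_apply_left hA hB hp (Equiv.Perm.sameCycle_apply_right.2 h)
  rwa [Equiv.Perm.mul_apply, hB] at h'

lemma zpow_add_self_apply_of_fixed (hA : Function.Involutive A) (hB : Function.Involutive B)
    (hp : B p = p) {n : ℤ} (hn : B (((B * A) ^ n) p) = ((B * A) ^ n) p) :
    ((B * A) ^ (n + n)) p = p := by
  have hflip : B (((B * A) ^ n) p) = ((B * A) ^ (-n)) p := by
    simpa only [Equiv.Perm.mul_apply, hp] using
      congrArg (· p) (mul_zpow_mul_of_involutive hA hB n)
  rw [zpow_add, Equiv.Perm.mul_apply, ← hn, hflip, ← Equiv.Perm.mul_apply, ← zpow_add,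
    add_neg_cancel, zpow_zero, Equiv.Perm.one_apply]

lemma dvd_sub_of_dvd_add_self {N a b : ℤ} (ha : N ∣ a + a) (hb : N ∣ b + b) (ha' : ¬N ∣ a)
    (hb' : ¬N ∣ b) : N ∣ a - b := by
  obtain ⟨s, hs⟩ := ha
  obtain ⟨t, ht⟩ := hb
  obtain ⟨i, rfl | rfl⟩ := Int.even_or_odd' s
  · exact absurd ⟨i, by linarith⟩ ha'
  obtain ⟨j, rfl | rfl⟩ := Int.even_or_odd' t
  · exact absurd ⟨j, by linarith⟩ hb'
  exact ⟨i - j, by linarith⟩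

/- The exponents leading from `p` to a `B`-fixed point double to multiples of the period of `p`,
so modulo that period at most one of them is nonzero. -/
lemma eq_of_sameCycle_of_fixed (hA : Function.Involutive A) (hB : Function.Involutive B)
    (hp : B p = p) (hq : B q = q) (hr : B r = r) (hpq : (B * A).SameCycle p q)
    (hpr : (B * A).SameCycle p r) (hqp : q ≠ p) (hrp : r ≠ p) : q = r := by
  obtain ⟨a, rfl⟩ := hpq
  obtain ⟨b, rfl⟩ := hpr
  have hdvd (n : ℤ) : ((B * A) ^ n) p = p ↔ (MulAction.period (B * A) p : ℤ) ∣ n :=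
    MulAction.zpow_smul_eq_iff_period_dvd (g := B * A) (a := p)
  have hab : ((B * A) ^ (a - b)) p = p := (hdvd _).2 <|
    dvd_sub_of_dvd_add_self ((hdvd _).1 (zpow_add_self_apply_of_fixed hA hB hp hq))
      ((hdvd _).1 (zpow_add_self_apply_of_fixed hA hB hp hr)) (mt (hdvd a).2 hqp)
      (mt (hdvd b).2 hrp)
  conv_rhs => rw [← hab, ← Equiv.Perm.mul_apply, ← zpow_add, add_sub_cancel]

end DihedralOrbit

lemma neg_mem_Mset {n : ℕ} {z : ℤ} (hz : z ∈ Mset n) : -z ∈ Mset n :=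
  ⟨(Int.natAbs_neg z).symm ▸ hz.1, fun h => hz.2 (neg_eq_zero.1 h)⟩

lemma ne_zero_of_mem_Mset {m : ℕ} {z : ℤ} (hz : z ∈ Mset (2 * m)) : z ≠ 0 := fun h =>
  Nat.not_odd_iff_even.2 (even_two_mul m) (hz.2 h)

lemma ncard_Mset (n : ℕ) : (Mset n).ncard = n := by
  obtain ⟨m, rfl | rfl⟩ := n.even_or_odd'
  · have h : Mset (2 * m) = ↑((Finset.Icc (-m : ℤ) m).erase 0) := by
      ext z
      simp only [Mset, Set.mem_ofPred_eq, Finset.coe_erase, Finset.coe_Icc, Set.mem_sdiff,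
        Set.mem_Icc, Set.mem_singleton_iff, Nat.not_odd_iff_even.2 (even_two_mul m), imp_false]
      lia
    rw [h, Set.ncard_coe_finset, Finset.card_erase_of_mem (by simp), Int.card_Icc]
    lia
  · have h : Mset (2 * m + 1) = ↑(Finset.Icc (-m : ℤ) m) := by
      ext z
      simp only [Mset, Set.mem_ofPred_eq, Finset.coe_Icc, Set.mem_Icc, odd_two_mul_add_one,
        implies_true]
      lia
    rw [h, Set.ncard_coe_finset, Int.card_Icc]
    lia

/-- The signed graph `(G, σ)` admits a proper `n`-edge coloring. -/
def ProperlyColorable {V : Type*} (G : SimpleGraph V) (σ : Sym2 V → ℤ) (n : ℕ) : Prop :=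
  ∃ c : SColoring G σ n, c.Proper

/-- An odd involution of the integers preserving the color set `Mset n`: a recoloring rule that
respects the compatibility condition on both positive and negative edges. -/
structure OddInvolution (n : ℕ) where
  toFun : ℤ → ℤ
  involutive : Function.Involutive toFun
  map_neg : ∀ z, toFun (-z) = -toFun z
  mapsTo : Set.MapsTo toFun (Mset n) (Mset n)

namespace OddInvolution

instance (n : ℕ) : CoeFun (OddInvolution n) fun _ => ℤ → ℤ := ⟨toFun⟩

variable {m : ℕ} {x y z : ℤ}

/-- The odd involution exchanging `x` with `y`, and hence `-x` with `-y`. For `y = -x` it is the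
sign change on `{x, -x}`. -/
def swap (hx : x ∈ Mset (2 * m)) (hy : y ∈ Mset (2 * m)) : OddInvolution (2 * m) where
  toFun z := if z = x then y else if z = y then x else if z = -x then -y else
    if z = -y then -x else z
  involutive z := by grind [ne_zero_of_mem_Mset hx, ne_zero_of_mem_Mset hy]
  map_neg z := by grind [ne_zero_of_mem_Mset hx, ne_zero_of_mem_Mset hy]
  mapsTo z hz := by
    dsimp only
    split_ifs
    exacts [hy, hx, neg_mem_Mset hy, neg_mem_Mset hx, hz]

variable (hx : x ∈ Mset (2 * m)) (hy : y ∈ Mset (2 * m))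

@[simp]
lemma swap_left : swap hx hy x = y := if_pos rfl

@[simp]
lemma swap_right : swap hx hy y = x := by
  grind [swap]

lemma swap_of_abs_ne (hzx : |z| ≠ |x|) (hzy : |z| ≠ |y|) : swap hx hy z = z := by
  grind [swap, abs_neg]

end OddInvolution

namespace SColoring

variable {V : Type*} {G H : SimpleGraph V} {σ : Sym2 V → ℤ} {n : ℕ}

/-- The colors available for extending `c` at `u`. -/
def missing (c : SColoring G σ n) (u : V) : Set ℤ :=
  {z ∈ Mset n | c.Absent z u}

section MissingCount

variable {u : V}

lemma exists_mem_missing_notMem (c : SColoring H σ n) {s : Finset V}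
    (hs : ∀ w, H.Adj u w → w ∈ s) (t : Finset ℤ) (h : s.card + t.card < n) :
    ∃ z ∈ c.missing u, z ∉ t := by
  classical
  by_contra! hmem
  have hsub : Mset n ⊆ ↑(s.image (fun w => c.col u s(u, w)) ∪ t) := fun z hz => by
    by_cases habs : c.Absent z u
    · exact Finset.mem_union_right _ (hmem z ⟨hz, habs⟩)
    · unfold Absent at habs
      push Not at habs
      obtain ⟨w, hw, rfl⟩ := habs
      exact Finset.mem_union_left _ (Finset.mem_image_of_mem _ (hs w hw))
  have hcard := Set.ncard_le_ncard hsub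
  rw [ncard_Mset, Set.ncard_coe_finset] at hcard
  exact (hcard.trans ((Finset.card_union_le _ _).trans
    (Nat.add_le_add_right Finset.card_image_le _))).not_gt h

variable [Fintype (G.neighborSet u)]

lemma missing_nonempty (c : SColoring H σ n) (hHG : H ≤ G) (h : G.degree u < n) :
    (c.missing u).Nonempty := by
  obtain ⟨z, hz, -⟩ := c.exists_mem_missing_notMem
    (fun w hw => (G.mem_neighborFinset u w).2 (hHG hw)) ∅ h
  exact ⟨z, hz⟩

lemma exists_mem_missing_notMem_of_deleteEdges {e : Sym2 V}
    (c : SColoring (G.deleteEdges {e}) σ n) (he : e ∈ G.edgeSet) (hu : u ∈ e) (t : Finset ℤ)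
    (h : G.degree u + t.card ≤ n) : ∃ z ∈ c.missing u, z ∉ t := by
  classical
  obtain ⟨x, rfl⟩ := hu
  refine c.exists_mem_missing_notMem (s := (G.neighborFinset u).erase x) (fun w hw => ?_) t ?_
  · obtain ⟨hw, hwx⟩ := deleteEdges_adj.1 hw
    exact Finset.mem_erase.2 ⟨fun h => hwx (congrArg _ h), (G.mem_neighborFinset u w).2 hw⟩
  · exact (Nat.add_lt_add_right
      (Finset.card_erase_lt_of_mem ((G.mem_neighborFinset u x).2 he)) _).trans_le h

end MissingCount

section Restrict

/-- The coloring of a subgraph obtained by forgetting the colors of the other edges. -/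
def restrict (c : SColoring G σ n) (h : H ≤ G) : SColoring H σ n where
  col := c.col
  mem_colors _ _ huw := c.mem_colors (h huw)
  compat _ _ huw := c.compat (h huw)

variable {c : SColoring G σ n} {u x : V}

lemma Proper.restrict (hc : c.Proper) (h : H ≤ G) : (c.restrict h).Proper :=
  fun _ _ _ hw hx => hc (h hw) (h hx)

lemma missing_subset_missing_restrict (c : SColoring G σ n) (h : H ≤ G) (u : V) :
    c.missing u ⊆ (c.restrict h).missing u :=
  fun _ hz => ⟨hz.1, fun _ hw => hz.2 (h hw)⟩

lemma Proper.col_mem_missing_restrict (hc : c.Proper) (h : H ≤ G) (hG : G.Adj u x)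
    (hH : ¬H.Adj u x) : c.col u s(u, x) ∈ (c.restrict h).missing u :=
  ⟨c.mem_colors hG, fun _ hw => hc (h hw) hG fun hwx => hH (hwx ▸ hw)⟩

end Restrict

section AddEdge

variable {e f : Sym2 V} {z a : ℤ} {u : V}

open Classical in
/-- The extension of a coloring of `G - e` that gives both incidences of the negative edge `e`
the color `z`. -/
noncomputable def addEdge (c : SColoring (G.deleteEdges {e}) σ n) (he : σ e = -1)
    (hz : z ∈ Mset n) : SColoring G σ n where
  col u := Function.update (c.col u) e z
  mem_colors u w huw := by
    by_cases h : s(u, w) = e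
    · rwa [h, Function.update_self]
    · rw [Function.update_of_ne h]
      exact c.mem_colors (deleteEdges_adj.2 ⟨huw, h⟩)
  compat u w huw := by
    by_cases h : s(u, w) = e
    · rw [h, Function.update_self, Function.update_self, he, neg_neg, one_mul]
    · rw [Function.update_of_ne h, Function.update_of_ne h]
      exact c.compat (deleteEdges_adj.2 ⟨huw, h⟩)

variable {c : SColoring (G.deleteEdges {e}) σ n} (he : σ e = -1) (hz : z ∈ Mset n)

lemma col_addEdge_self (u : V) : (c.addEdge he hz).col u e = z :=
  by classical exact Function.update_self ..

lemma col_addEdge_of_ne (hf : f ≠ e) (u : V) : (c.addEdge he hz).col u f = c.col u f :=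
  by classical exact Function.update_of_ne hf ..

lemma mem_missing_addEdge (ha : a ∈ c.missing u) (hu : u ∈ e → a ≠ z) :
    a ∈ (c.addEdge he hz).missing u := by
  refine ⟨ha.1, fun w huw => ?_⟩
  by_cases h : s(u, w) = e
  · rw [h, col_addEdge_self]
    exact (hu (h ▸ Sym2.mem_mk_left u w)).symm
  · rw [col_addEdge_of_ne he hz h]
    exact ha.2 (deleteEdges_adj.2 ⟨huw, h⟩)

lemma Proper.addEdge (hc : c.Proper) (hez : ∀ u ∈ e, c.Absent z u) :
    (c.addEdge he hz).Proper := by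
  intro u w x hw hx hwx
  by_cases hwe : s(u, w) = e <;> by_cases hxe : s(u, x) = e
  · exact absurd (Sym2.congr_right.1 (hwe.trans hxe.symm)) hwx
  · rw [hwe, col_addEdge_self, col_addEdge_of_ne he hz hxe]
    exact (hez u (hwe ▸ Sym2.mem_mk_left u w) (deleteEdges_adj.2 ⟨hx, hxe⟩)).symm
  · rw [hxe, col_addEdge_self, col_addEdge_of_ne he hz hwe]
    exact hez u (hxe ▸ Sym2.mem_mk_left u x) (deleteEdges_adj.2 ⟨hw, hwe⟩)
  · rw [col_addEdge_of_ne he hz hwe, col_addEdge_of_ne he hz hxe]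
    exact hc (deleteEdges_adj.2 ⟨hw, hwe⟩) (deleteEdges_adj.2 ⟨hx, hxe⟩) hwx

end AddEdge

section Kempe

variable {c : SColoring G σ n} {π : OddInvolution n} {K L : Set (V × ℤ)} {p q r : V × ℤ}
  {u w : V} {y z : ℤ}

open Classical in
/-- Encode the incidence of color `z` at `u` by `(u, z)`; then `c.cross` passes to the other
incidence of the same edge, and fixes `(u, z)` when `z` is absent at `u`. -/
noncomputable def cross (c : SColoring G σ n) (p : V × ℤ) : V × ℤ :=
  if h : ∃ w, G.Adj p.1 w ∧ c.col p.1 s(p.1, w) = p.2 then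
    (h.choose, c.col h.choose s(p.1, h.choose)) else p

lemma Proper.cross_col (hc : c.Proper) (h : G.Adj u w) :
    c.cross (u, c.col u s(u, w)) = (w, c.col w s(u, w)) := by
  have hex : ∃ x, G.Adj u x ∧ c.col u s(u, x) = c.col u s(u, w) := ⟨w, h, rfl⟩
  have hw : hex.choose = w :=
    by_contra fun hne => hc hex.choose_spec.1 h hne hex.choose_spec.2
  rw [cross, dif_pos hex, hw]

lemma Absent.cross_eq (h : c.Absent p.2 p.1) : c.cross p = p :=
  dif_neg fun ⟨_, hw, hcol⟩ => h hw hcol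

lemma Proper.cross_involutive (hc : c.Proper) : Function.Involutive c.cross := by
  rintro ⟨u, z⟩
  by_cases h : ∃ w, G.Adj u w ∧ c.col u s(u, w) = z
  · obtain ⟨w, hw, rfl⟩ := h
    rw [hc.cross_col hw, Sym2.eq_swap, hc.cross_col hw.symm]
  · have hfix : c.cross (u, z) = (u, z) := dif_neg h
    rw [hfix, hfix]

/-- The permutation of incidences that crosses edges. -/
noncomputable def Proper.edgePerm (hc : c.Proper) : Equiv.Perm (V × ℤ) :=
  hc.cross_involutive.toPerm

/-- The permutation of incidences that applies `π` to the color and keeps the vertex. -/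
def colorPerm (V : Type*) (π : OddInvolution n) : Equiv.Perm (V × ℤ) :=
  (Equiv.refl V).prodCongr π.involutive.toPerm

lemma colorPerm_involutive (π : OddInvolution n) : Function.Involutive (colorPerm V π) :=
  fun p => Prod.ext rfl (π.involutive p.2)

/-- The Kempe chain of `p` for the recoloring rule `π`. The orbit of `p` under a product of two
involutions traverses the whole chain only if `p` is one of its ends. -/
def Proper.kempeChain (hc : c.Proper) (π : OddInvolution n) (p : V × ℤ) : Set (V × ℤ) :=
  {q | (hc.edgePerm * colorPerm V π).SameCycle p q}

/-- `K` is a union of Kempe chains of `c` for the recoloring rule `π`. -/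
structure IsKempe (c : SColoring G σ n) (π : OddInvolution n) (K : Set (V × ℤ)) : Prop where
  color : ∀ u z, (u, π z) ∈ K ↔ (u, z) ∈ K
  edge : ∀ ⦃u w⦄, G.Adj u w → ((u, c.col u s(u, w)) ∈ K ↔ (w, c.col w s(u, w)) ∈ K)

lemma IsKempe.union (hK : c.IsKempe π K) (hL : c.IsKempe π L) : c.IsKempe π (K ∪ L) where
  color u z := or_congr (hK.color u z) (hL.color u z)
  edge _ _ h := or_congr (hK.edge h) (hL.edge h)

lemma IsKempe.exists_mem_iff_mem (hL : c.IsKempe π L) (hK : c.IsKempe π K)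
    (hLK : Disjoint L K) (hp : p ∈ K) (q : V × ℤ) :
    ∃ J, c.IsKempe π J ∧ L ⊆ J ∧ J ⊆ L ∪ K ∧ (q ∈ J ↔ p ∈ J) := by
  by_cases hq : q ∈ L
  · exact ⟨L ∪ K, hL.union hK, Set.subset_union_left, subset_rfl,
      iff_of_true (.inl hq) (.inr hp)⟩
  · exact ⟨L, hL, subset_rfl, Set.subset_union_left,
      iff_of_false hq (Set.disjoint_right.1 hLK hp)⟩

lemma Proper.mem_kempeChain_self (hc : c.Proper) (π : OddInvolution n) (p : V × ℤ) :
    p ∈ hc.kempeChain π p :=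
  Equiv.Perm.SameCycle.refl _ _

lemma Proper.isKempe_kempeChain (hc : c.Proper) (π : OddInvolution n) (hp : c.Absent p.2 p.1) :
    c.IsKempe π (hc.kempeChain π p) where
  color u z := by
    have hstep (z) (hz : (u, z) ∈ hc.kempeChain π p) : (u, π z) ∈ hc.kempeChain π p :=
      sameCycle_mul_apply_right (colorPerm_involutive π) hc.cross_involutive hp.cross_eq hz
    exact ⟨fun hz => π.involutive z ▸ hstep _ hz, hstep z⟩
  edge u w huw := by
    have hstep {u w} (huw : G.Adj u w) (hu : (u, c.col u s(u, w)) ∈ hc.kempeChain π p) :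
        (w, c.col w s(u, w)) ∈ hc.kempeChain π p :=
      hc.cross_col huw ▸
        sameCycle_mul_apply_left (colorPerm_involutive π) hc.cross_involutive hp.cross_eq hu
    exact ⟨hstep huw, fun hw => by
      rw [Sym2.eq_swap] at hw ⊢
      exact hstep huw.symm hw⟩

/- A Kempe chain has at most two ends. -/
lemma Proper.disjoint_kempeChain (hc : c.Proper) (hp : c.Absent p.2 p.1)
    (hq : c.Absent q.2 q.1) (hr : c.Absent r.2 r.1) (hpq : q ∈ hc.kempeChain π p)
    (hqp : q ≠ p) (hrp : r ≠ p) (hrq : r ≠ q) :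
    Disjoint (hc.kempeChain π r) (hc.kempeChain π p) := by
  refine Set.disjoint_left.2 fun x hrx hpx => hrq ?_
  have hpr : r ∈ hc.kempeChain π p := Equiv.Perm.SameCycle.trans hpx hrx.symm
  exact (eq_of_sameCycle_of_fixed (colorPerm_involutive π) hc.cross_involutive hp.cross_eq
    hq.cross_eq hr.cross_eq hpq hpr hqp hrp).symm

open Classical in
/-- The color that replaces `z` at `u` when `π` is applied along `K`. -/
noncomputable def exchangeOn (π : OddInvolution n) (K : Set (V × ℤ)) (u : V) (z : ℤ) : ℤ :=
  if (u, z) ∈ K then π z else z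

lemma exchangeOn_of_mem (h : (u, z) ∈ K) : exchangeOn π K u z = π z := if_pos h

lemma exchangeOn_of_notMem (h : (u, z) ∉ K) : exchangeOn π K u z = z := if_neg h

lemma exchangeOn_of_fixed (h : π z = z) : exchangeOn π K u z = z := by
  rw [exchangeOn, h, ite_self]

lemma exchangeOn_mem_Mset (hz : z ∈ Mset n) : exchangeOn π K u z ∈ Mset n := by
  unfold exchangeOn
  split_ifs
  exacts [π.mapsTo hz, hz]

lemma IsKempe.exchangeOn_injective (hK : c.IsKempe π K) (u : V) :
    Function.Injective (exchangeOn π K u) := by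
  intro y z hyz
  have hy := hK.color u y
  have hz := hK.color u z
  unfold exchangeOn at hyz
  split_ifs at hyz with hyK hzK hzK
  · exact π.involutive.injective hyz
  · exact absurd (hyz ▸ hy.2 hyK) hzK
  · exact absurd (hyz ▸ hz.2 hzK) hyK
  · exact hyz

/-- The coloring obtained from `c` by applying `π` along the union `K` of Kempe chains. -/
noncomputable def exchange (c : SColoring G σ n) (hσ : ∀ e ∈ G.edgeSet, σ e = 1 ∨ σ e = -1)
    (hK : c.IsKempe π K) : SColoring G σ n where
  col u f := exchangeOn π K u (c.col u f)
  mem_colors _ _ huw := exchangeOn_mem_Mset (c.mem_colors huw)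
  compat u w huw := by
    have hcompat := c.compat huw
    have hneg := π.map_neg (c.col w s(u, w))
    have hmem := hK.edge huw
    unfold exchangeOn
    rcases hσ s(u, w) huw with h | h <;> rw [h] at hcompat ⊢ <;> split_ifs <;> grind

variable (hσ : ∀ e ∈ G.edgeSet, σ e = 1 ∨ σ e = -1) (hK : c.IsKempe π K)

lemma Proper.exchange (hc : c.Proper) : (c.exchange hσ hK).Proper :=
  fun u _ _ hw hx hwx h => hc hw hx hwx (hK.exchangeOn_injective u h)

lemma exchangeOn_mem_missing (hz : z ∈ c.missing u) :
    exchangeOn π K u z ∈ (c.exchange hσ hK).missing u :=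
  ⟨exchangeOn_mem_Mset hz.1, fun _ hw h => hz.2 hw (hK.exchangeOn_injective u h)⟩

lemma mem_missing_exchange_of_notMem (hz : z ∈ c.missing u) (h : (u, z) ∉ K) :
    z ∈ (c.exchange hσ hK).missing u := by
  simpa only [exchangeOn_of_notMem h] using exchangeOn_mem_missing hσ hK hz

lemma apply_mem_missing_exchange_of_mem (hz : z ∈ c.missing u) (h : (u, z) ∈ K) :
    π z ∈ (c.exchange hσ hK).missing u := by
  simpa only [exchangeOn_of_mem h] using exchangeOn_mem_missing hσ hK hz

end Kempe

section Fan

/-- The color at `v` of the edge leading to the vertex after `w t` in the sequence `w`. -/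
def fanColor (c : SColoring G σ n) (v : V) (w : ℕ → V) (t : ℕ) : ℤ :=
  c.col v s(v, w (t + 1))

/-- A Vizing fan `w 0, …, w k` at `v`, for a proper coloring `c` of all the edges of `G` but
`v (w 0)`: each edge `v (w (t + 1))` has at `v` a color that is absent at `w t`, so that the colors
can be shifted along the fan until `v (w k)` becomes the uncolored edge. -/
structure IsFan (G : SimpleGraph V) (v : V) (c : SColoring H σ n) (w : ℕ → V) (k : ℕ) : Prop where
  proper : c.Proper
  graph_eq : H = G.deleteEdges {s(v, w 0)}
  injOn : Set.InjOn w (Set.Iic k)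
  adj : ∀ t ≤ k, G.Adj v (w t)
  absent : ∀ t < k, c.Absent (c.fanColor v w t) (w t)

/-- `σ` is a signature of `G` for which all the edges at `v` are negative, so that each of them
has the same color at both ends. -/
structure IsNegativeAt (G : SimpleGraph V) (σ : Sym2 V → ℤ) (v : V) : Prop where
  sign : ∀ e ∈ G.edgeSet, σ e = 1 ∨ σ e = -1
  star : ∀ ⦃x⦄, G.Adj v x → σ s(v, x) = -1

lemma IsNegativeAt.col_eq_col {v x : V} (hN : IsNegativeAt G σ v) {c : SColoring H σ n}
    (hHG : H ≤ G) (h : H.Adj v x) : c.col x s(v, x) = c.col v s(v, x) := by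
  rw [c.compat h, hN.star (hHG h), neg_neg, one_mul]

lemma properlyColorable_of_mem_missing {v x : V} {z : ℤ} (hN : IsNegativeAt G σ v)
    {c : SColoring (G.deleteEdges {s(v, x)}) σ n} (hc : c.Proper) (hvx : G.Adj v x)
    (hv : z ∈ c.missing v) (hx : z ∈ c.missing x) : ProperlyColorable G σ n :=
  ⟨c.addEdge (hN.star hvx) hv.1, hc.addEdge _ _ <| by
    simpa only [Sym2.mem_iff, forall_eq_or_imp, forall_eq] using And.intro hv.2 hx.2⟩

/- The edge `vx` receives the color of `vy`, which becomes uncolored. -/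
lemma exists_move_uncolored {v x y : V} (hN : IsNegativeAt G σ v)
    {c : SColoring (G.deleteEdges {s(v, x)}) σ n} (hc : c.Proper) (hvx : G.Adj v x)
    (hvy : (G.deleteEdges {s(v, x)}).Adj v y) (hx : c.Absent (c.col v s(v, y)) x) :
    ∃ c' : SColoring (G.deleteEdges {s(v, y)}) σ n, c'.Proper ∧
      (∀ f ≠ s(v, x), c'.col v f = c.col v f) ∧ c.col v s(v, y) ∈ c'.missing y ∧
      ∀ u ≠ x, c.missing u ⊆ c'.missing u := by
  have hle : (G.deleteEdges {s(v, y)}).deleteEdges {s(v, x)} ≤ G.deleteEdges {s(v, x)} :=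
    deleteEdges_mono (deleteEdges_le _)
  have hnadj : ¬((G.deleteEdges {s(v, y)}).deleteEdges {s(v, x)}).Adj v y := fun h =>
    (deleteEdges_adj.1 (deleteEdges_le _ h)).2 rfl
  have hyx : y ≠ x := by
    rintro rfl
    exact (deleteEdges_adj.1 hvy).2 rfl
  have hcol : c.col y s(y, v) = c.col v s(v, y) :=
    (congrArg (c.col y) Sym2.eq_swap).trans (hN.col_eq_col (deleteEdges_le _) hvy)
  have hv := hc.col_mem_missing_restrict hle hvy hnadj
  have hy := hc.col_mem_missing_restrict hle hvy.symm fun h => hnadj h.symm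
  have hmiss (u : V) : c.missing u ⊆ (c.restrict hle).missing u :=
    c.missing_subset_missing_restrict hle u
  refine ⟨(c.restrict hle).addEdge (hN.star hvx) (c.mem_colors hvy),
    (hc.restrict hle).addEdge _ _ ?_, fun f hf => col_addEdge_of_ne _ _ hf v, ?_,
    fun u hu a ha => mem_missing_addEdge _ _ (hmiss u ha) fun hmem => ?_⟩
  · simpa only [Sym2.mem_iff, forall_eq_or_imp, forall_eq] using
      And.intro hv.2 (hmiss x ⟨c.mem_colors hvy, hx⟩).2
  · exact mem_missing_addEdge _ _ (hcol ▸ hy) fun hmem => absurd (Sym2.mem_iff.1 hmem)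
      (not_or.2 ⟨hvy.ne', hyx⟩)
  · obtain rfl | rfl := Sym2.mem_iff.1 hmem
    exacts [(ha.2 hvy).symm, absurd rfl hu]

namespace IsFan

variable {c : SColoring H σ n} {v : V} {w : ℕ → V} {k s t : ℕ} {z : ℤ}

lemma le (h : IsFan G v c w k) : H ≤ G :=
  h.graph_eq.trans_le (deleteEdges_le _)

lemma sign (h : IsFan G v c w k) (hN : IsNegativeAt G σ v) :
    ∀ e ∈ H.edgeSet, σ e = 1 ∨ σ e = -1 :=
  fun e he => hN.sign e (edgeSet_mono h.le he)

lemma mono (h : IsFan G v c w k) (ht : t ≤ k) : IsFan G v c w t where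
  proper := h.proper
  graph_eq := h.graph_eq
  injOn := h.injOn.mono (Set.Iic_subset_Iic.2 ht)
  adj s hs := h.adj s (hs.trans ht)
  absent s hs := h.absent s (hs.trans_le ht)

lemma ne (h : IsFan G v c w k) (hst : s < t) (ht : t ≤ k) : w s ≠ w t :=
  fun he => hst.ne (h.injOn (hst.le.trans ht) ht he)

lemma edge_ne (h : IsFan G v c w k) (hst : s < t) (ht : t ≤ k) : s(v, w s) ≠ s(v, w t) :=
  mt Sym2.congr_right.1 (h.ne hst ht)

lemma adj_succ (h : IsFan G v c w k) (ht : t < k) : H.Adj v (w (t + 1)) := by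
  rw [h.graph_eq, deleteEdges_adj]
  exact ⟨h.adj _ ht, (h.edge_ne t.succ_pos ht).symm⟩

lemma fanColor_mem_missing (h : IsFan G v c w k) (ht : t < k) :
    c.fanColor v w t ∈ c.missing (w t) :=
  ⟨c.mem_colors (h.adj_succ ht), h.absent t ht⟩

lemma fanColor_ne (h : IsFan G v c w k) (hst : s < t) (ht : t < k) :
    c.fanColor v w s ≠ c.fanColor v w t :=
  h.proper (h.adj_succ (hst.trans ht)) (h.adj_succ ht) (h.ne (Nat.succ_lt_succ hst) ht)

lemma fanColor_injOn (h : IsFan G v c w k) : Set.InjOn (c.fanColor v w) (Set.Iio k) := by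
  intro s hs t ht hst
  by_contra hne
  obtain hlt | hlt := Ne.lt_or_gt hne
  exacts [h.fanColor_ne hlt ht hst, h.fanColor_ne hlt hs hst.symm]

lemma fanColor_ne_of_mem_missing (h : IsFan G v c w k) (ht : t < k) (hz : z ∈ c.missing v) :
    c.fanColor v w t ≠ z :=
  hz.2 (h.adj_succ ht)

lemma exchange {π : OddInvolution n} {K : Set (V × ℤ)} (h : IsFan G v c w k)
    (hN : IsNegativeAt G σ v) (hK : c.IsKempe π K)
    (hstable : ∀ t < k,
      exchangeOn π K v (c.fanColor v w t) = exchangeOn π K (w t) (c.fanColor v w t)) :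
    IsFan G v (c.exchange (h.sign hN) hK) w k where
  proper := h.proper.exchange _ hK
  graph_eq := h.graph_eq
  injOn := h.injOn
  adj := h.adj
  absent t ht := by
    have hmem := exchangeOn_mem_missing (h.sign hN) hK (h.fanColor_mem_missing ht)
    exact (hstable t ht ▸ hmem).2

lemma extend (h : IsFan G v c w k) {x : V} (hx : H.Adj v x) (hxw : ∀ t ≤ k, w t ≠ x)
    (hcol : c.Absent (c.col v s(v, x)) (w k)) :
    IsFan G v c (Function.update w (k + 1) x) (k + 1) := by
  have hw (t : ℕ) (ht : t ≤ k) : Function.update w (k + 1) x t = w t :=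
    Function.update_of_ne (by lia) ..
  refine ⟨h.proper, by rw [hw 0 k.zero_le]; exact h.graph_eq, ?_, fun t ht => ?_, fun t ht => ?_⟩
  · intro s hs t ht hst
    grind [h.injOn.eq_iff]
  · rcases Nat.le_succ_iff.1 ht with ht | rfl
    · exact hw t ht ▸ h.adj t ht
    · rw [Function.update_self]
      exact h.le hx
  · rw [fanColor, hw t (Nat.le_of_lt_succ ht)]
    rcases (Nat.le_of_lt_succ ht).lt_or_eq with ht | rfl
    · rw [hw (t + 1) ht]
      exact h.absent t ht
    · rwa [Function.update_self]

lemma rotate (h : IsFan G v c w (k + 1)) (hN : IsNegativeAt G σ v) :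
    ∃ c' : SColoring (G.deleteEdges {s(v, w 1)}) σ n, IsFan G v c' (fun t => w (t + 1)) k ∧
      (∀ t < k, c'.fanColor v (fun t => w (t + 1)) t = c.fanColor v w (t + 1)) ∧
      c.fanColor v w 0 ∈ c'.missing (w 1) ∧ ∀ u ≠ w 0, c.missing u ⊆ c'.missing u := by
  obtain rfl := h.graph_eq
  obtain ⟨c', hc', hcol, hmem, hmiss⟩ := exists_move_uncolored hN h.proper
    (h.adj 0 (Nat.zero_le _)) (h.adj_succ k.succ_pos) (h.absent 0 k.succ_pos)
  have hfan (t : ℕ) (ht : t < k) :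
      c'.fanColor v (fun t => w (t + 1)) t = c.fanColor v w (t + 1) :=
    hcol _ (h.edge_ne (t + 1).succ_pos (Nat.succ_lt_succ ht)).symm
  refine ⟨c', ⟨hc', rfl, fun s hs t ht hst => ?_, fun t ht => h.adj _ (Nat.succ_le_succ ht),
    fun t ht => ?_⟩, hfan, hmem, hmiss⟩
  · exact Nat.succ_injective (h.injOn (Nat.succ_le_succ hs) (Nat.succ_le_succ ht) hst)
  · rw [hfan t ht]
    exact (hmiss _ (h.ne t.succ_pos (by lia)).symm
      (h.fanColor_mem_missing (Nat.succ_lt_succ ht))).2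

lemma exists_shift (h : IsFan G v c w k) (hN : IsNegativeAt G σ v) :
    ∃ c' : SColoring (G.deleteEdges {s(v, w k)}) σ n, c'.Proper ∧
      c.missing v ⊆ c'.missing v ∧ c.missing (w k) ⊆ c'.missing (w k) := by
  induction k generalizing H w with
  | zero =>
    obtain rfl := h.graph_eq
    exact ⟨c, h.proper, subset_rfl, subset_rfl⟩
  | succ k ih =>
    obtain ⟨c₁, h₁, -, -, hmiss⟩ := h.rotate hN
    obtain ⟨c₂, hc₂, hv, hw⟩ := ih h₁
    exact ⟨c₂, hc₂, (hmiss v (h.adj 0 (Nat.zero_le _)).ne).trans hv,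
      (hmiss _ (h.ne k.succ_pos le_rfl).symm).trans hw⟩

lemma properlyColorable (h : IsFan G v c w k) (hN : IsNegativeAt G σ v) (hv : z ∈ c.missing v)
    (hw : z ∈ c.missing (w k)) : ProperlyColorable G σ n := by
  obtain ⟨c', hc', hv', hw'⟩ := h.exists_shift hN
  exact properlyColorable_of_mem_missing hN hc' (h.adj k le_rfl) (hv' hv) (hw' hw)

lemma lt_degree [Fintype (G.neighborSet v)] (h : IsFan G v c w k) : k < G.degree v := by
  rw [Nat.lt_iff_add_one_le, ← Finset.card_range (k + 1), ← card_neighborFinset_eq_degree]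
  exact Finset.card_le_card_of_injOn w
    (fun t ht => (G.mem_neighborFinset v _).2 (h.adj t (Finset.mem_range_succ_iff.1 ht)))
    (h.injOn.mono fun t ht => Finset.mem_range_succ_iff.1 ht)

lemma exists_fanColor_eq_or_extend (h : IsFan G v c w k) (hN : IsNegativeAt G σ v)
    (hno : ¬ProperlyColorable G σ n) (hz : z ∈ c.missing (w k)) :
    (∃ j < k, c.fanColor v w j = z) ∨
      ∃ x, IsFan G v c (Function.update w (k + 1) x) (k + 1) ∧ c.col v s(v, x) = z := by
  obtain ⟨x, hx, rfl⟩ : ∃ x, H.Adj v x ∧ c.col v s(v, x) = z := by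
    by_contra! habs
    exact hno (h.properlyColorable hN ⟨hz.1, habs⟩ hz)
  by_cases hnew : ∀ t ≤ k, w t ≠ x
  · exact .inr ⟨x, h.extend hx hnew hz.2, rfl⟩
  push Not at hnew
  obtain ⟨t, ht, rfl⟩ := hnew
  obtain _ | j := t
  · rw [h.graph_eq] at hx
    exact absurd rfl (deleteEdges_adj.1 hx).2
  · exact .inl ⟨j, ht, rfl⟩

/- A longest fan cannot be extended, so every color missing at its last vertex is repeated. -/
lemma exists_fanColor_mem_missing [G.LocallyFinite] {x₀ : V} (hN : IsNegativeAt G σ v)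
    (hno : ¬ProperlyColorable G σ n) (hdeg : ∀ x, G.Adj v x → G.degree x < n)
    {c : SColoring (G.deleteEdges {s(v, x₀)}) σ n} (hc : c.Proper) (hvx₀ : G.Adj v x₀) (y : ℤ) :
    ∃ w k j, IsFan G v c w k ∧ w 0 = x₀ ∧ c.fanColor v w 0 ≠ y ∧ j < k ∧
      c.fanColor v w j ∈ c.missing (w k) := by
  by_contra! hrepeat
  have hlong (k : ℕ) : ∃ w, IsFan G v c w k ∧ w 0 = x₀ ∧ (0 < k → c.fanColor v w 0 ≠ y) := by
    induction k with
    | zero => exact ⟨fun _ => x₀, ⟨hc, rfl, fun s hs t ht _ => by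
        rw [Nat.le_zero.1 hs, Nat.le_zero.1 ht], fun _ _ => hvx₀, nofun⟩, rfl, nofun⟩
    | succ k ih =>
      obtain ⟨w, h, hw₀, hwy⟩ := ih
      obtain ⟨z, hz, hzy⟩ : ∃ z ∈ c.missing (w k), k = 0 → z ≠ y := by
        obtain rfl | hk := k.eq_zero_or_pos
        · obtain ⟨z, hz, hzy⟩ := c.exists_mem_missing_notMem_of_deleteEdges hvx₀
            (Sym2.mem_mk_right v x₀) {y} (hdeg x₀ hvx₀)
          exact ⟨z, hw₀ ▸ hz, fun _ => mt Finset.mem_singleton.2 hzy⟩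
        · obtain ⟨z, hz⟩ := c.missing_nonempty (deleteEdges_le _) (hdeg _ (h.adj k le_rfl))
          exact ⟨z, hz, fun hk' => absurd hk' hk.ne'⟩
      obtain ⟨j, hj, rfl⟩ | ⟨x, hx, rfl⟩ := h.exists_fanColor_eq_or_extend hN hno hz
      · exact absurd hz (hrepeat w k j h hw₀ (hwy (Nat.zero_lt_of_lt hj)) hj)
      refine ⟨_, hx, (Function.update_of_ne (by lia) ..).trans hw₀, fun _ => ?_⟩
      obtain rfl | hk := k.eq_zero_or_pos
      · rw [fanColor, Function.update_self]
        exact hzy rfl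
      · rw [fanColor, Function.update_of_ne (by lia)]
        exact hwy hk
  obtain ⟨w, h, -⟩ := hlong (G.degree v)
  exact h.lt_degree.false

end IsFan

end Fan

section FanKempe

lemma exchangeOn_eq_exchangeOn {π : OddInvolution n} {K : Set (V × ℤ)} {u u' : V} {z : ℤ}
    (h : (u, z) ∈ K ↔ (u', z) ∈ K) : exchangeOn π K u z = exchangeOn π K u' z := by
  by_cases hu : (u, z) ∈ K
  · rw [exchangeOn_of_mem hu, exchangeOn_of_mem (h.1 hu)]
  · rw [exchangeOn_of_notMem hu, exchangeOn_of_notMem (mt h.2 hu)]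

namespace IsFan

open OddInvolution

variable {m j k p q : ℕ} {c : SColoring H σ (2 * m)} {v : V} {w : ℕ → V} {α γ : ℤ}

lemma properlyColorable_of_exchange {π : OddInvolution n} {K : Set (V × ℤ)}
    {c : SColoring H σ n} (h : IsFan G v c w k) (hN : IsNegativeAt G σ v) (hK : c.IsKempe π K)
    (hstable : ∀ t < k,
      exchangeOn π K v (c.fanColor v w t) = exchangeOn π K (w t) (c.fanColor v w t))
    (hα : α ∈ c.missing v) (hvK : (v, α) ∉ K) (hγ : γ ∈ c.missing (w k)) (hwK : (w k, γ) ∈ K)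
    (hπ : π γ = α) : ProperlyColorable G σ n :=
  (h.exchange hN hK hstable).properlyColorable hN
    (mem_missing_exchange_of_notMem _ hK hα hvK)
    (hπ ▸ apply_mem_missing_exchange_of_mem _ hK hγ hwK)

lemma mem_kempeChain_swap (h : IsFan G v c w k) (hN : IsNegativeAt G σ v)
    (hno : ¬ProperlyColorable G σ (2 * m)) (hα : α ∈ c.missing v) (hγ : γ ∈ c.missing (w k))
    (hfanα : ∀ t < k, |c.fanColor v w t| ≠ |α|) (hfanγ : ∀ t < k, |c.fanColor v w t| ≠ |γ|) :
    (v, α) ∈ h.proper.kempeChain (swap hα.1 hγ.1) (w k, γ) := by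
  by_contra hlink
  refine hno <| h.properlyColorable_of_exchange hN (h.proper.isKempe_kempeChain _ hγ.2)
    (fun t ht => ?_) hα hlink hγ (h.proper.mem_kempeChain_self _ _) (swap_right _ _)
  have hfix := swap_of_abs_ne hα.1 hγ.1 (hfanα t ht) (hfanγ t ht)
  rw [exchangeOn_of_fixed hfix, exchangeOn_of_fixed hfix]

/- The chain of `(v, α)` cannot end both at `w 0` and at `w k`. -/
lemma properlyColorable_of_mem_missing_ends (h : IsFan G v c w k) (hN : IsNegativeAt G σ v)
    (hk : 0 < k) (hα : α ∈ c.missing v) (hγ₀ : γ ∈ c.missing (w 0)) (hγ : γ ∈ c.missing (w k))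
    (hfanα : ∀ t < k, |c.fanColor v w t| ≠ |α|) (hfanγ : ∀ t < k, |c.fanColor v w t| ≠ |γ|) :
    ProperlyColorable G σ (2 * m) := by
  by_contra hno
  have hlink := h.mem_kempeChain_swap hN hno hα hγ hfanα hfanγ
  have hlink₀ := (h.mono k.zero_le).mem_kempeChain_swap hN hno hα hγ₀ nofun nofun
  exact Set.disjoint_left.1 (h.proper.disjoint_kempeChain hγ.2 hα.2 hγ₀.2 hlink
    (ne_of_apply_ne Prod.fst (h.adj k le_rfl).ne) (ne_of_apply_ne Prod.fst (h.ne hk le_rfl))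
    (ne_of_apply_ne Prod.fst (h.adj 0 k.zero_le).ne')) hlink₀ hlink

lemma properlyColorable_of_repeat_zero (h : IsFan G v c w (k + 1)) (hN : IsNegativeAt G σ v)
    (hα : α ∈ c.missing v) (h₀ : c.fanColor v w 0 ∈ c.missing (w (k + 1)))
    (hfanα : ∀ t < k + 1, |c.fanColor v w t| ≠ |α|)
    (hfan₀ : ∀ t < k + 1, 0 < t → c.fanColor v w t ≠ -c.fanColor v w 0) :
    ProperlyColorable G σ (2 * m) := by
  obtain ⟨c', h', hcol, hmem, hmiss⟩ := h.rotate hN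
  have hk : 0 < k := by
    rw [Nat.pos_iff_ne_zero]
    rintro rfl
    have hadj := h.adj_succ Nat.one_pos
    exact h₀.2 hadj.symm (Sym2.eq_swap ▸ hN.col_eq_col h.le hadj)
  refine h'.properlyColorable_of_mem_missing_ends hN hk
    (hmiss v (h.adj 0 (Nat.zero_le _)).ne hα) hmem (hmiss _ (h.ne k.succ_pos le_rfl).symm h₀)
    (fun t ht => hcol t ht ▸ hfanα (t + 1) (Nat.succ_lt_succ ht)) fun t ht => ?_
  rw [hcol t ht, Ne, abs_eq_abs, not_or]
  have ht' := Nat.succ_lt_succ ht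
  exact ⟨(h.fanColor_ne t.succ_pos ht').symm, hfan₀ _ ht' t.succ_pos⟩

lemma properlyColorable_of_repeat_of_ne_neg (h : IsFan G v c w k) (hN : IsNegativeAt G σ v)
    (hjk : j < k) (hα : α ∈ c.missing v) (hj : c.fanColor v w j ∈ c.missing (w k))
    (hfanα : ∀ t < k, |c.fanColor v w t| ≠ |α|)
    (hfanj : ∀ t < k, j < t → c.fanColor v w t ≠ -c.fanColor v w j) :
    ProperlyColorable G σ (2 * m) := by
  induction j generalizing H w k with
  | zero =>
    obtain ⟨k, rfl⟩ := Nat.exists_eq_add_of_lt hjk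
    rw [zero_add] at *
    exact h.properlyColorable_of_repeat_zero hN hα hj hfanα hfanj
  | succ j ih =>
    obtain ⟨k, rfl⟩ := Nat.exists_eq_succ_of_ne_zero (Nat.ne_zero_of_lt hjk)
    obtain ⟨c', h', hcol, -, hmiss⟩ := h.rotate hN
    have hjk' : j < k := Nat.lt_of_succ_lt_succ hjk
    refine ih h' hjk' (hmiss v (h.adj 0 (Nat.zero_le _)).ne hα) ?_
      (fun t ht => hcol t ht ▸ hfanα (t + 1) (Nat.succ_lt_succ ht)) fun t ht hjt => ?_
    · rw [hcol j hjk']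
      exact hmiss _ (h.ne k.succ_pos le_rfl).symm hj
    · rw [hcol t ht, hcol j hjk']
      exact hfanj (t + 1) (Nat.succ_lt_succ ht) (Nat.succ_lt_succ hjt)

/-- The recoloring rule exchanging the color `α` missing at `v` with the color at `v` of the edge
`v (w (p + 1))`. -/
abbrev swapFanColor (h : IsFan G v c w k) (hpk : p < k) (hα : α ∈ c.missing v) :
    OddInvolution (2 * m) :=
  swap hα.1 (h.fanColor_mem_missing hpk).1

lemma mem_kempeChain_fanColor (h : IsFan G v c w k) (hN : IsNegativeAt G σ v)
    (hno : ¬ProperlyColorable G σ (2 * m)) (hpk : p < k) (hα : α ∈ c.missing v)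
    (hfanα : ∀ t < p, |c.fanColor v w t| ≠ |α|)
    (hfanp : ∀ t < p, c.fanColor v w t ≠ -c.fanColor v w p) :
    (v, α) ∈ h.proper.kempeChain (h.swapFanColor hpk hα) (w p, c.fanColor v w p) := by
  refine (h.mono hpk.le).mem_kempeChain_swap hN hno hα (h.fanColor_mem_missing hpk) hfanα
    fun t ht => ?_
  rw [Ne, abs_eq_abs, not_or]
  exact ⟨h.fanColor_ne ht hpk, hfanp t ht⟩

lemma disjoint_kempeChain_fanColor {π : OddInvolution (2 * m)} {u : V} {y : ℤ}
    (h : IsFan G v c w k) (hpk : p < k) (hα : α ∈ c.missing v)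
    (hlink : (v, α) ∈ h.proper.kempeChain π (w p, c.fanColor v w p)) (huy : c.Absent y u)
    (hu : u ≠ w p) (huv : u ≠ v) :
    Disjoint (h.proper.kempeChain π (u, y))
      (h.proper.kempeChain π (w p, c.fanColor v w p)) :=
  h.proper.disjoint_kempeChain (h.absent p hpk) hα.2 huy hlink
    (ne_of_apply_ne Prod.fst (h.adj p hpk.le).ne) (ne_of_apply_ne Prod.fst hu)
    (ne_of_apply_ne Prod.fst huv)

/- The color `β = c.fanColor v w p` is kept because both `(v, β)` and `(w p, β)` lie on the chain
avoided by `J`. -/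
lemma exchangeOn_swap_eq_self {J : Set (V × ℤ)} {t : ℕ} (h : IsFan G v c w k) (hpk : p < k)
    (hα : α ∈ c.missing v)
    (hlink : (v, α) ∈ h.proper.kempeChain (h.swapFanColor hpk hα)
      (w p, c.fanColor v w p))
    (hJ : Disjoint J (h.proper.kempeChain (h.swapFanColor hpk hα)
      (w p, c.fanColor v w p)))
    (ht : t < k) (htα : |c.fanColor v w t| ≠ |α|) (htp : c.fanColor v w t ≠ -c.fanColor v w p) :
    ∀ u ∈ ({v, w t} : Set V), exchangeOn (h.swapFanColor hpk hα) J u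
      (c.fanColor v w t) = c.fanColor v w t := by
  obtain rfl | hne := eq_or_ne t p
  · have hvβ := ((h.proper.isKempe_kempeChain _ (h.absent t ht)).color v α).2 hlink
    rw [swap_left] at hvβ
    rintro u (rfl | rfl)
    · exact exchangeOn_of_notMem (Set.disjoint_right.1 hJ hvβ)
    · exact exchangeOn_of_notMem (Set.disjoint_right.1 hJ (h.proper.mem_kempeChain_self _ _))
  · refine fun u _ => exchangeOn_of_fixed (swap_of_abs_ne _ _ htα ?_)
    rw [Ne, abs_eq_abs, not_or]
    exact ⟨h.fanColor_injOn.ne ht hpk hne, htp⟩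

lemma exists_exchange_neg (h : IsFan G v c w q) (hN : IsNegativeAt G σ v)
    (hno : ¬ProperlyColorable G σ (2 * m)) (hpq : p < q) (hα : α ∈ c.missing v)
    (hq : -c.fanColor v w p ∈ c.missing (w q)) (hfanα : ∀ t < q, |c.fanColor v w t| ≠ |α|)
    (hfanp : ∀ t < q, c.fanColor v w t ≠ -c.fanColor v w p) :
    ∃ c' : SColoring H σ (2 * m), IsFan G v c' w q ∧
      (∀ t < q, |c'.fanColor v w t| ≠ |α|) ∧ α ∈ c'.missing v ∧
      -α ∈ c'.missing (w q) ∧ ∀ u, -α ∈ c.missing u →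
        (u, -α) ∉ h.proper.kempeChain (h.swapFanColor hpq hα)
          (w q, -c.fanColor v w p) → -α ∈ c'.missing u := by
  have hlink := h.mem_kempeChain_fanColor hN hno hpq hα (fun t ht => hfanα t (ht.trans hpq))
    fun t ht => hfanp t (ht.trans hpq)
  have hdisj := h.disjoint_kempeChain_fanColor hpq hα hlink hq.2 (h.ne hpq le_rfl).symm
    (h.adj q le_rfl).ne'
  have hK := h.proper.isKempe_kempeChain (h.swapFanColor hpq hα)
    (p := (w q, -c.fanColor v w p)) hq.2
  have hkeep (t : ℕ) (ht : t < q) :=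
    h.exchangeOn_swap_eq_self hpq hα hlink hdisj ht (hfanα t ht) (hfanp t ht)
  refine ⟨c.exchange (h.sign hN) hK,
    h.exchange hN hK fun t ht => (hkeep t ht v (.inl rfl)).trans (hkeep t ht (w t) (.inr rfl)).symm,
    fun t ht => ?_, ?_, ?_, fun u hu huK => mem_missing_exchange_of_notMem _ hK hu huK⟩
  · exact (congrArg abs (hkeep t ht v (.inl rfl))).trans_ne (hfanα t ht)
  · exact mem_missing_exchange_of_notMem _ hK hα (Set.disjoint_right.1 hdisj hlink)
  · have hmem := apply_mem_missing_exchange_of_mem (h.sign hN) hK hq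
      (h.proper.mem_kempeChain_self _ _)
    rwa [OddInvolution.map_neg, swap_right] at hmem

lemma mem_kempeChain_neg (h : IsFan G v c w q) (hN : IsNegativeAt G σ v)
    (hno : ¬ProperlyColorable G σ (2 * m)) (hpq : p < q) (hα : α ∈ c.missing v)
    (hα₀ : -α ∈ c.missing (w 0)) (hq : -c.fanColor v w p ∈ c.missing (w q))
    (hfanα : ∀ t < q, |c.fanColor v w t| ≠ |α|)
    (hfanp : ∀ t < q, c.fanColor v w t ≠ -c.fanColor v w p) :
    (w 0, -α) ∈ h.proper.kempeChain (h.swapFanColor hpq hα) (w q, -c.fanColor v w p) := by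
  by_contra hα₀K
  obtain ⟨c', h', hfanα', hα', hqα, hmiss⟩ :=
    h.exists_exchange_neg hN hno hpq hα hq hfanα hfanp
  refine hno <| h'.properlyColorable_of_mem_missing_ends hN (Nat.zero_lt_of_lt hpq) hα'
    (hmiss _ hα₀ hα₀K) hqα hfanα' ?_
  simpa only [abs_neg] using hfanα'

lemma properlyColorable_of_neg_repeat (h : IsFan G v c w k) (hN : IsNegativeAt G σ v)
    (hpq : p < q) (hqk : q < k) (hα : α ∈ c.missing v) (hα₀ : -α ∈ c.missing (w 0))
    (hq : c.fanColor v w q = -c.fanColor v w p) (hk : c.fanColor v w p ∈ c.missing (w k))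
    (hfanα : ∀ t < k, |c.fanColor v w t| ≠ |α|) : ProperlyColorable G σ (2 * m) := by
  by_contra hno
  have hpk := hpq.trans hqk
  have hfanp (t : ℕ) (ht : t < k) (htq : t ≠ q) : c.fanColor v w t ≠ -c.fanColor v w p :=
    hq ▸ h.fanColor_injOn.ne ht hqk htq
  have hqmem : -c.fanColor v w p ∈ c.missing (w q) := hq ▸ h.fanColor_mem_missing hqk
  have hlink := h.mem_kempeChain_fanColor hN hno hpk hα (fun t ht => hfanα t (ht.trans hpk))
    fun t ht => hfanp t (ht.trans hpk) (ht.trans hpq).ne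
  have hα₀K := (h.mono hqk.le).mem_kempeChain_neg hN hno hpq hα hα₀ hqmem
    (fun t ht => hfanα t (ht.trans hqk)) fun t ht => hfanp t (ht.trans hqk) ht.ne
  have hKP := h.disjoint_kempeChain_fanColor hpk hα hlink hqmem.2
    (h.ne hpq hqk.le).symm (h.adj q hqk.le).ne'
  have hLP := h.disjoint_kempeChain_fanColor hpk hα hlink hk.2
    (h.ne hpk le_rfl).symm (h.adj k le_rfl).ne'
  have hLK := h.proper.disjoint_kempeChain (r := (w k, c.fanColor v w p)) hqmem.2 hα₀.2 hk.2 hα₀K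
    (ne_of_apply_ne Prod.fst (h.ne (Nat.zero_lt_of_lt hpq) hqk.le))
    (ne_of_apply_ne Prod.fst (h.ne hqk le_rfl).symm)
    (ne_of_apply_ne Prod.fst (h.ne (Nat.zero_lt_of_lt hpk) le_rfl).symm)
  /- If the chain of `(w k, β)`, where `β = c.fanColor v w p`, recolors the edge `v (w (q + 1))`,
  then the chain of `(w q, -β)` has to be exchanged as well for the fan to survive. -/
  obtain ⟨J, hJ, hLJ, hJLK, hvJ⟩ := (h.proper.isKempe_kempeChain _ hk.2).exists_mem_iff_mem
    (h.proper.isKempe_kempeChain _ hqmem.2) hLK (h.proper.mem_kempeChain_self _ _)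
    (v, -c.fanColor v w p)
  have hJP := (hLP.union_left hKP).mono_left hJLK
  refine hno <| h.properlyColorable_of_exchange hN hJ (fun t ht => ?_) hα
    (Set.disjoint_right.1 hJP hlink) hk (hLJ (h.proper.mem_kempeChain_self _ _)) (swap_right _ _)
  obtain rfl | htq := eq_or_ne t q
  · rw [hq]
    exact exchangeOn_eq_exchangeOn hvJ
  · have hkeep := h.exchangeOn_swap_eq_self hpk hα hlink hJP ht (hfanα t ht) (hfanp t ht htq)
    exact (hkeep v (.inl rfl)).trans (hkeep (w t) (.inr rfl)).symm

end IsFan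

end FanKempe
section LocalExtension

variable {m j k p q t : ℕ} {v x : V} {α : ℤ} [G.LocallyFinite]

lemma properlyColorable_of_neg_mem_missing (hN : IsNegativeAt G σ v)
    (hdeg : ∀ u, G.Adj v u → G.degree u < 2 * m)
    {c : SColoring (G.deleteEdges {s(v, x)}) σ (2 * m)} (hc : c.Proper) (hvx : G.Adj v x)
    (hα : α ∈ c.missing v) (hx : -α ∈ c.missing x) : ProperlyColorable G σ (2 * m) := by
  by_contra hno
  obtain ⟨w, k, j, h, rfl, h₀, hjk, hj⟩ :=
    IsFan.exists_fanColor_mem_missing hN hno hdeg hc hvx (-α)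
  have hfanα (t : ℕ) (ht : t < k) : |c.fanColor v w t| ≠ |α| := by
    induction t using Nat.strong_induction_on with
    | _ t ih =>
      have hlt (s : ℕ) (hs : s < t) := ih s hs (hs.trans ht)
      rw [Ne, abs_eq_abs, not_or]
      refine ⟨h.fanColor_ne_of_mem_missing ht hα, fun hneg => ?_⟩
      obtain rfl | htpos := t.eq_zero_or_pos
      · exact h₀ hneg
      · exact hno <| (h.mono ht.le).properlyColorable_of_mem_missing_ends hN htpos hα hx
          (hneg ▸ h.fanColor_mem_missing ht) hlt (by simpa only [abs_neg] using hlt)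
  by_cases hneg : ∃ q < k, j < q ∧ c.fanColor v w q = -c.fanColor v w j
  · obtain ⟨q, hqk, hjq, hq⟩ := hneg
    exact hno (h.properlyColorable_of_neg_repeat hN hjq hqk hα hx hq hj hfanα)
  · push Not at hneg
    exact hno (h.properlyColorable_of_repeat_of_ne_neg hN hjk hα hj hfanα hneg)

namespace IsFan

variable {c : SColoring H σ (2 * m)} {w : ℕ → V}

lemma neg_notMem_missing (h : IsFan G v c w k) (hN : IsNegativeAt G σ v)
    (hno : ¬ProperlyColorable G σ (2 * m)) (hdeg : ∀ u, G.Adj v u → G.degree u < 2 * m)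
    (hα : α ∈ c.missing v) : -α ∉ c.missing (w k) := fun hw => by
  obtain ⟨c', hc', hv', hw'⟩ := h.exists_shift hN
  exact hno (properlyColorable_of_neg_mem_missing hN hdeg hc' (h.adj k le_rfl) (hv' hα) (hw' hw))

lemma abs_fanColor_ne (h : IsFan G v c w k) (hN : IsNegativeAt G σ v)
    (hno : ¬ProperlyColorable G σ (2 * m)) (hdeg : ∀ u, G.Adj v u → G.degree u < 2 * m)
    (hα : α ∈ c.missing v) (ht : t < k) : |c.fanColor v w t| ≠ |α| := by
  rw [Ne, abs_eq_abs, not_or]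
  exact ⟨h.fanColor_ne_of_mem_missing ht hα, fun hneg =>
    (h.mono ht.le).neg_notMem_missing hN hno hdeg hα (hneg ▸ h.fanColor_mem_missing ht)⟩

lemma fanColor_ne_neg (h : IsFan G v c w k) (hN : IsNegativeAt G σ v)
    (hno : ¬ProperlyColorable G σ (2 * m)) (hdeg : ∀ u, G.Adj v u → G.degree u < 2 * m)
    (hα : α ∈ c.missing v) (hpq : p < q) (hqk : q < k) :
    c.fanColor v w q ≠ -c.fanColor v w p := fun hq => by
  obtain ⟨c', h', -, hα', hqα, -⟩ := (h.mono hqk.le).exists_exchange_neg hN hno hpq hα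
    (hq ▸ h.fanColor_mem_missing hqk)
    (fun t ht => h.abs_fanColor_ne hN hno hdeg hα (ht.trans hqk))
    fun t ht => hq ▸ h.fanColor_ne ht hqk
  exact h'.neg_notMem_missing hN hno hdeg hα' hqα

end IsFan

lemma IsNegativeAt.properlyColorable_of_deleteEdges (hN : IsNegativeAt G σ v)
    (hvx : G.Adj v x) (hv : G.degree v ≤ 2 * m) (hdeg : ∀ u, G.Adj v u → G.degree u < 2 * m)
    (hG : ProperlyColorable (G.deleteEdges {s(v, x)}) σ (2 * m)) :
    ProperlyColorable G σ (2 * m) := by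
  by_contra hno
  obtain ⟨c, hc⟩ := hG
  obtain ⟨α, hα, -⟩ := c.exists_mem_missing_notMem_of_deleteEdges hvx (Sym2.mem_mk_left v x) ∅ hv
  obtain ⟨w, k, j, h, -, -, hjk, hj⟩ :=
    IsFan.exists_fanColor_mem_missing hN hno hdeg hc hvx 0
  exact hno <| h.properlyColorable_of_repeat_of_ne_neg hN hjk hα hj
    (fun t ht => h.abs_fanColor_ne hN hno hdeg hα ht)
    fun t ht hjt => h.fanColor_ne_neg hN hno hdeg hα hjt ht

end LocalExtension

section Switch

/-- The signature obtained from `σ` by switching the vertices `u` with `s u = -1`, that is, by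
negating the sign of every edge between a switched and an unswitched vertex. -/
def switch (s : V → ℤˣ) (σ : Sym2 V → ℤ) (e : Sym2 V) : ℤ :=
  (e.map s).mul * σ e

lemma switch_switch (s : V → ℤˣ) (σ : Sym2 V → ℤ) : switch s (switch s σ) = σ := by
  funext e
  rw [switch, switch, ← mul_assoc, ← Units.val_mul, Int.units_mul_self, Units.val_one, one_mul]

lemma _root_.ProperlyColorable.switch (s : V → ℤˣ) (h : ProperlyColorable G σ n) :
    ProperlyColorable G (switch s σ) n := by
  obtain ⟨c, hc⟩ := h
  refine ⟨⟨fun u e => s u * c.col u e, fun u w h => ?_, fun u w h => ?_⟩, fun u w x hw hx hwx => ?_⟩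
  · rcases Int.units_eq_one_or (s u) with hs | hs <;> rw [hs]
    · simpa using c.mem_colors h
    · simpa using neg_mem_Mset (c.mem_colors h)
  · have hw : (s w * s w : ℤ) = 1 := by
      rw [← Units.val_mul, Int.units_mul_self, Units.val_one]
    rw [c.compat h, SColoring.switch, Sym2.map_mk, Sym2.mul_mk, Units.val_mul]
    linear_combination s u * σ s(u, w) * c.col w s(u, w) * hw
  · exact mt (mul_left_cancel₀ (Units.ne_zero (s u))) (hc hw hx hwx)

lemma switch_eq_one_or {e : Sym2 V} (s : V → ℤˣ) (h : σ e = 1 ∨ σ e = -1) :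
    switch s σ e = 1 ∨ switch s σ e = -1 := by
  rw [switch]
  rcases Int.units_eq_one_or (e.map s).mul with hs | hs <;> rcases h with h | h <;> simp [hs, h]

lemma exists_isNegativeAt_switch (hσ : ∀ e ∈ G.edgeSet, σ e = 1 ∨ σ e = -1) (v : V) :
    ∃ s, IsNegativeAt G (switch s σ) v := by
  classical
  refine ⟨fun u => if G.Adj v u ∧ σ s(v, u) = 1 then -1 else 1,
    fun e he => switch_eq_one_or _ (hσ e he), fun x hx => ?_⟩
  rcases hσ s(v, x) hx with h | h <;> simp [switch, h, hx]

lemma properlyColorable_of_deleteEdges {m : ℕ} {v x : V} [G.LocallyFinite]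
    (hσ : ∀ e ∈ G.edgeSet, σ e = 1 ∨ σ e = -1) (hvx : G.Adj v x) (hv : G.degree v ≤ 2 * m)
    (hdeg : ∀ u, G.Adj v u → G.degree u < 2 * m)
    (hG : ProperlyColorable (G.deleteEdges {s(v, x)}) σ (2 * m)) :
    ProperlyColorable G σ (2 * m) := by
  obtain ⟨s, hN⟩ := exists_isNegativeAt_switch hσ v
  exact switch_switch s σ ▸ (hN.properlyColorable_of_deleteEdges hvx hv hdeg (hG.switch s)).switch s

end Switch

end SColoring

lemma exists_adj_forall_degree_lt {V : Type*} {G : SimpleGraph V} [G.LocallyFinite] {n : ℕ}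
    (hG : G ≠ ⊥) (hdeg : ∀ v, G.degree v ≤ n) (hind : G.IsIndepSet {v | G.degree v = n}) :
    ∃ v x, G.Adj v x ∧ ∀ y, G.Adj v y → G.degree y < n := by
  obtain ⟨u, x, hux⟩ := ne_bot_iff_exists_adj.1 hG
  by_cases hu : ∀ y, G.Adj u y → G.degree y < n
  · exact ⟨u, x, hux, hu⟩
  push Not at hu
  obtain ⟨v, huv, hv⟩ := hu
  exact ⟨v, u, huv.symm, fun y hvy => (hdeg y).lt_of_ne fun hy =>
    hind (hv.antisymm' (hdeg v)) hy hvy.ne hvy⟩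

theorem colorable_of_maxDegree_indep_general {V : Type*} [Fintype V] (G : SimpleGraph V)
    [DecidableRel G.Adj] (σ : Sym2 V → ℤ) (hσ : ∀ e ∈ G.edgeSet, σ e = 1 ∨ σ e = -1)
    {n : ℕ} (hn : Even n) (hdeg : ∀ v, G.degree v ≤ n)
    (hind : G.IsIndepSet {v | G.degree v = n}) : ∃ c : SColoring G σ n, c.Proper := by
  obtain ⟨m, rfl⟩ := even_iff_two_dvd.1 hn
  classical
  induction G using WellFoundedLT.induction generalizing ‹DecidableRel G.Adj› with
  | _ G ih =>
    obtain rfl | hG := eq_or_ne G ⊥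
    · exact ⟨⟨fun _ _ => 0, nofun, nofun⟩, nofun⟩
    obtain ⟨v, x, hvx, hnbr⟩ := exists_adj_forall_degree_lt hG hdeg hind
    have hle := G.deleteEdges_le {s(v, x)}
    have hlt : G.deleteEdges {s(v, x)} < G := hle.lt_of_not_ge fun h =>
      (deleteEdges_adj.1 (h hvx)).2 rfl
    have hdegle (u : V) : (G.deleteEdges {s(v, x)}).degree u ≤ G.degree u := degree_le_of_le hle
    have heq {u : V} (hu : (G.deleteEdges {s(v, x)}).degree u = 2 * m) : G.degree u = 2 * m :=
      (hdeg u).antisymm (hu ▸ hdegle u)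
    exact SColoring.properlyColorable_of_deleteEdges hσ hvx (hdeg v) hnbr <|
      ih _ hlt (fun e he => hσ e (edgeSet_mono hle he)) (fun u => (hdegle u).trans (hdeg u))
        fun u hu w hw huw h => hind (heq hu) (heq hw) huw (hle h)

/-- If `Δ(Σ)` is even and the set of vertices of maximum degree is an independent set,
then `Σ` admits a proper edge coloring with `Δ(Σ)` colors. -/
theorem colorable_of_maxDegree_indep {V : Type*} [Fintype V] (G : SimpleGraph V)
    [DecidableRel G.Adj] (σ : Sym2 V → ℤ)
    (hσ : ∀ e ∈ G.edgeSet, σ e = 1 ∨ σ e = -1)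
    (hΔ : Even G.maxDegree)
    (hind : ∀ v w : V, G.degree v = G.maxDegree → G.degree w = G.maxDegree →
      ¬G.Adj v w) :
    ∃ c : SColoring G σ G.maxDegree, c.Proper :=
  colorable_of_maxDegree_indep_general G σ hσ hΔ G.degree_le_maxDegree
    fun v hv w hw _ => hind v w hv hw
end

section
/- If every edge of the signed graph Σ = (Γ, σ) is negative, then every a/b-Kempe chain with respect to a proper n-edge coloring of Σ is a path, i.e., the trail K_{a,b}(v₀, v_m) has no repeated vertices. -/
open SimpleGraph

/-- The defining properties of an `a/b`-Kempe trail of the coloring `c` starting at the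
vertex `v₀` (where `a` is absent at `v₀` and the chain starts with a `b`-colored edge):
it is a trail whose edge-color magnitudes alternate `|b|, |a|, |b|, …`, and at each
interior vertex `v i` the two incident chain edges are colored `(-1)^{t_i}·a` and
`(-1)^{t_i}·b`, where `t_i` is the number of positive edges among the first `i` edges
of the trail. -/
def IsKempeTrail {V : Type*} {G : SimpleGraph V} {σ : Sym2 V → ℤ} {n : ℕ}
    (c : SColoring G σ n) (a b : ℤ) {v₀ vm : V} (W : G.Walk v₀ vm) : Prop :=
  W.IsTrail ∧
  c.Absent a v₀ ∧
  (0 < W.length → c.col v₀ s(v₀, W.getVert 1) = b) ∧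
  (∀ i < W.length,
    (c.col (W.getVert i) s(W.getVert i, W.getVert (i + 1))).natAbs =
      if Even i then b.natAbs else a.natAbs) ∧
  (∀ i, 0 < i → i < W.length →
    ({c.col (W.getVert i) s(W.getVert (i - 1), W.getVert i),
      c.col (W.getVert i) s(W.getVert i, W.getVert (i + 1))} : Set ℤ) =
    {(-1) ^ ((W.edges.take i).countP fun e => σ e == 1) * a,
     (-1) ^ ((W.edges.take i).countP fun e => σ e == 1) * b})

/-- The `a/b`-Kempe chain `K_{a,b}(v₀, vm)`: a *maximal* `a/b`-Kempe trail. -/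
def IsKempeChain {V : Type*} {G : SimpleGraph V} {σ : Sym2 V → ℤ} {n : ℕ}
    (c : SColoring G σ n) (a b : ℤ) {v₀ vm : V} (W : G.Walk v₀ vm) : Prop :=
  IsKempeTrail c a b W ∧
    ∀ ⦃x : V⦄ (h : G.Adj vm x), ¬IsKempeTrail c a b (W.concat h)

/-! At an inner vertex of an `a/b`-Kempe trail the two trail edges use up the colors `a` and `b`,
and at the initial vertex the first edge uses up `b` while `a` is absent; so, the coloring being
proper, no further edge there has color `a` or `b`. A negative edge has the same color at both of
its endpoints, hence a step of the trail returning to an earlier vertex would have color `a` or `b`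
at that vertex as well, and would repeat an edge of the trail. -/

section Walk

variable {V : Type*} {G : SimpleGraph V} {u v : V} {W : G.Walk u v}

theorem isPath_of_getVert_ne_getVert_succ
    (hW : ∀ ⦃i j : ℕ⦄, i ≤ j → j < W.length → W.getVert i ≠ W.getVert (j + 1)) : W.IsPath := by
  rw [Walk.isPath_def, List.nodup_iff_pairwise_ne, List.pairwise_iff_getElem]
  intro i j hi hj hij
  obtain ⟨j, rfl⟩ := Nat.exists_eq_add_one_of_ne_zero (Nat.ne_zero_of_lt hij)
  rw [Walk.length_support] at hj
  simpa only [Walk.support_getElem_eq_getVert] using hW (by lia) (by lia)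

theorem edge_getVert_inj_of_isTrail (hW : W.IsTrail) {i j : ℕ} (hi : i < W.length)
    (hj : j < W.length) :
    s(W.getVert i, W.getVert (i + 1)) = s(W.getVert j, W.getVert (j + 1)) ↔ i = j := by
  rw [← W.length_edges] at hi hj
  rw [← Walk.getElem_edges hi, ← Walk.getElem_edges hj, hW.edges_nodup.getElem_inj_iff]

end Walk

namespace SColoring

variable {V : Type*} {G : SimpleGraph V} {σ : Sym2 V → ℤ} {n : ℕ}

theorem col_eq_col_of_neg (c : SColoring G σ n) {v w : V} (hvw : G.Adj v w)
    (hneg : σ s(v, w) = -1) : c.col v s(v, w) = c.col w s(v, w) := by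
  simpa only [hneg, neg_neg, one_mul] using c.compat hvw

theorem Proper.col_eq_col_iff {c : SColoring G σ n} (hc : c.Proper) {v w x : V}
    (hvw : G.Adj v w) (hvx : G.Adj v x) :
    c.col v s(v, w) = c.col v s(v, x) ↔ w = x :=
  ⟨fun hcol => by_contra fun hwx => hc hvw hvx hwx hcol, fun hwx => by rw [hwx]⟩

end SColoring

namespace IsKempeTrail

variable {V : Type*} {G : SimpleGraph V} {σ : Sym2 V → ℤ} {n : ℕ} {c : SColoring G σ n}
  {a b : ℤ} {v₀ vm : V} {W : G.Walk v₀ vm}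

theorem pair_col_eq (hW : IsKempeTrail c a b W) (hneg : ∀ e ∈ W.edges, σ e = -1) {i : ℕ}
    (hi : i + 1 < W.length) :
    ({c.col (W.getVert (i + 1)) s(W.getVert (i + 1), W.getVert i),
      c.col (W.getVert (i + 1)) s(W.getVert (i + 1), W.getVert (i + 2))} : Set ℤ) = {a, b} := by
  obtain ⟨-, -, -, -, hpair⟩ := hW
  have no_pos_edge : (W.edges.take (i + 1)).countP (fun e => σ e == 1) = 0 :=
    List.countP_eq_zero.2 fun e he => by simp [hneg e (List.mem_of_mem_take he)]
  simpa only [no_pos_edge, pow_zero, one_mul, Nat.add_sub_cancel,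
    Sym2.eq_swap (a := W.getVert i)] using hpair (i + 1) i.succ_pos hi

theorem col_mem_pair (hW : IsKempeTrail c a b W) (hneg : ∀ e ∈ W.edges, σ e = -1) {i : ℕ}
    (hi : i < W.length) :
    c.col (W.getVert i) s(W.getVert i, W.getVert (i + 1)) ∈ ({a, b} : Set ℤ) := by
  cases i with
  | zero =>
    obtain ⟨-, -, hfirst, -, -⟩ := hW
    rw [Walk.getVert_zero, hfirst hi]
    exact .inr rfl
  | succ i =>
    rw [← hW.pair_col_eq hneg hi]
    exact .inr rfl

theorem eq_getVert_succ_or_pred_of_col_mem_pair (hW : IsKempeTrail c a b W) (hc : c.Proper)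
    (hneg : ∀ e ∈ W.edges, σ e = -1) {i : ℕ} (hi : i < W.length) {x : V}
    (hx : G.Adj (W.getVert i) x)
    (hcol : c.col (W.getVert i) s(W.getVert i, x) ∈ ({a, b} : Set ℤ)) :
    x = W.getVert (i + 1) ∨ ∃ k, i = k + 1 ∧ x = W.getVert k := by
  have hnext := W.adj_getVert_succ hi
  cases i with
  | zero =>
    obtain ⟨-, habsent, hfirst, -, -⟩ := hW
    rw [Walk.getVert_zero] at hx hcol hnext
    have hcol_b : c.col v₀ s(v₀, x) = b := hcol.resolve_left (habsent hx)
    exact .inl ((hc.col_eq_col_iff hx hnext).1 (hcol_b.trans (hfirst hi).symm))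
  | succ k =>
    have hprev := (W.adj_getVert_succ (Nat.lt_of_succ_lt hi)).symm
    rw [← hW.pair_col_eq hneg hi] at hcol
    obtain hcol | hcol := hcol
    · exact .inr ⟨k, rfl, (hc.col_eq_col_iff hx hprev).1 hcol⟩
    · exact .inl ((hc.col_eq_col_iff hx hnext).1 hcol)

end IsKempeTrail

theorem kempeChain_isPath_of_all_negative_general {V : Type*} {G : SimpleGraph V}
    {σ : Sym2 V → ℤ} {n : ℕ} {c : SColoring G σ n} (hc : c.Proper) {a b : ℤ} {v₀ vm : V}
    {W : G.Walk v₀ vm} (hW : IsKempeTrail c a b W) (hneg : ∀ e ∈ W.edges, σ e = -1) :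
    W.IsPath := by
  refine isPath_of_getVert_ne_getVert_succ fun i j hij hj hreturn => ?_
  have hadj := W.adj_getVert_succ hj
  have hcol : c.col (W.getVert i) s(W.getVert i, W.getVert j) ∈ ({a, b} : Set ℤ) := by
    have hedge := W.mk_mem_edges_iff_exists.2 ⟨j, hj, rfl⟩
    rw [hreturn, Sym2.eq_swap, ← c.col_eq_col_of_neg hadj (hneg _ hedge)]
    exact hW.col_mem_pair hneg hj
  obtain hnext | ⟨k, rfl, hprev⟩ :=
    hW.eq_getVert_succ_or_pred_of_col_mem_pair hc hneg (hij.trans_lt hj) (hreturn ▸ hadj.symm) hcol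
  · have hij_eq : i = j := (edge_getVert_inj_of_isTrail hW.1 (hij.trans_lt hj) hj).1 <| by
      rw [← hnext, hreturn, Sym2.eq_swap]
    exact hadj.ne (hij_eq ▸ hreturn)
  · have hkj_eq : k = j := (edge_getVert_inj_of_isTrail hW.1 (by lia) hj).1 <| by
      rw [hreturn, hprev]
    lia

/-- If every edge of `Σ` is negative, then every `a/b`-Kempe chain of a proper
`n`-edge coloring of `Σ` is a path: it has no repeated vertices. -/
theorem kempeChain_isPath_of_all_negative {V : Type*} [Fintype V] (G : SimpleGraph V)
    (σ : Sym2 V → ℤ) (hneg : ∀ e ∈ G.edgeSet, σ e = -1)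
    (n : ℕ) (c : SColoring G σ n) (hc : c.Proper)
    (a b : ℤ) (ha : a ∈ Mset n) (hb : b ∈ Mset n) {v₀ vm : V}
    (hbpres : ∃ w : V, G.Adj v₀ w ∧ c.col v₀ s(v₀, w) = b)
    (W : G.Walk v₀ vm) (hW : IsKempeChain c a b W) :
    W.support.Nodup :=
  (kempeChain_isPath_of_all_negative_general hc hW.1 fun e he =>
    hneg e (W.edges_subset_edgeSet he)).support_nodup
end

section
/- Let Γ be a finite connected 3-regular simple graph with no isthmus (no cut-edge/bridge). Then there exists a signature σ : E(Γ) → {+1, −1} such that the signed graph (Γ, σ) admits a proper 3-edge coloring (using colors from M₃ = {−1, 0, +1}). -/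
open SimpleGraph

/-!
Forgetting signs, a coloring with free signature assigns to each edge an absolute value; conversely,
since the signature may be chosen afterwards, all that matters is that at each vertex the value `0`
occurs at most once and each nonzero value at most twice, so that signs can tell the two apart.
For a cubic graph it is therefore enough to give `0` to the edges of a perfect matching and `1` to
all others, and Petersen's theorem supplies the matching. Petersen's theorem follows from Tutte's:
in a bridgeless cubic graph an odd vertex set emits an odd number of edges other than one, hence at
least three. If deleting `u` leaves `q` odd components, then at least `3 * q` edges enter `u`, while
at most `3 * #u` edges do.
-/

open Finset

section Boundary

variable {V : Type*} {G : SimpleGraph V}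

lemma even_card_interedges_self [DecidableRel G.Adj] (S : Finset V) :
    Even #(G.interedges S S) := by
  have hsum : ∑ _p ∈ G.interedges S S, (1 : ZMod 2) = 0 :=
    sum_involution (fun p _ ↦ p.swap) (fun _ _ ↦ CharTwo.add_self_eq_zero 1)
      (fun p hp _ hswap ↦ (G.mem_interedges_iff.mp hp).2.2.ne (congrArg Prod.snd hswap))
      (fun _ hp ↦ G.swap_mem_interedges_iff.mpr hp) (fun p _ ↦ p.swap_swap)
  rwa [sum_const, nsmul_one, ZMod.natCast_eq_zero_iff_even] at hsum

lemma isBridge_of_unique_boundary {S : Set V} {u v : V} (hu : u ∈ S) (hv : v ∉ S)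
    (hunique : ∀ x ∈ S, ∀ y ∉ S, G.Adj x y → x = u ∧ y = v) : G.IsBridge s(u, v) := by
  refine isBridge_iff.mpr fun ⟨p⟩ ↦ ?_
  obtain ⟨d, -, hfst, hsnd⟩ := p.exists_boundary_dart S hu hv
  obtain ⟨hadj, hne⟩ := deleteEdges_adj.mp d.adj
  obtain ⟨hu', hv'⟩ := hunique _ hfst _ hsnd hadj
  exact hne (by rw [hu', hv']; rfl)

variable [Fintype V] [DecidableRel G.Adj]

lemma card_interedges_univ_right (S : Finset V) :
    #(G.interedges S univ) = ∑ v ∈ S, G.degree v := by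
  simp_rw [interedges_def, card_filter, sum_product, ← card_filter,
    ← card_neighborFinset_eq_degree, neighborFinset_eq_filter]

lemma card_mul_le_sum_degree_of_pairwiseDisjoint {ι : Type*} {I : Finset ι} {A : ι → Finset V}
    {U : Finset V} {d : ℕ} (hdisj : (I : Set ι).PairwiseDisjoint A)
    (hd : ∀ i ∈ I, d ≤ #(G.interedges (A i) U)) :
    #I * d ≤ ∑ v ∈ U, G.degree v := by
  classical
  have := G.symm
  calc #I * d
    _ ≤ ∑ i ∈ I, #(G.interedges (A i) U) := card_nsmul_le_sum _ _ _ hd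
    _ = #(G.interedges (I.biUnion A) U) := by
      rw [interedges_biUnion_left, card_biUnion]
      exact fun i hi j hj hij ↦ G.interedges_disjoint_left (hdisj hi hj hij) U
    _ = #(G.interedges U (I.biUnion A)) := Rel.card_interedges_comm _ _
    _ ≤ #(G.interedges U univ) := card_le_card (G.interedges_mono subset_rfl (subset_univ _))
    _ = ∑ v ∈ U, G.degree v := card_interedges_univ_right U

variable [DecidableEq V]

lemma card_interedges_self_add_card_interedges_compl (S : Finset V) :
    #(G.interedges S S) + #(G.interedges S Sᶜ) = ∑ v ∈ S, G.degree v := by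
  rw [← card_interedges_univ_right, ← card_union_of_disjoint
    (G.interedges_disjoint_right S disjoint_compl_right)]
  congr 1
  ext p
  simp only [mem_union, mem_interedges_iff, mem_compl, mem_univ]
  tauto

lemma odd_card_interedges_compl_iff (S : Finset V) :
    Odd #(G.interedges S Sᶜ) ↔ Odd (∑ v ∈ S, G.degree v) := by
  rw [← card_interedges_self_add_card_interedges_compl, Nat.odd_add', iff_true_right
    (even_card_interedges_self S)]

lemma card_interedges_compl_ne_one (hbridge : ∀ e ∈ G.edgeSet, ¬G.IsBridge e) (S : Finset V) :
    #(G.interedges S Sᶜ) ≠ 1 := by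
  intro hcard
  obtain ⟨⟨u, v⟩, huv⟩ := card_eq_one.mp hcard
  have mem_iff (x y : V) : (x ∈ S ∧ y ∉ S ∧ G.Adj x y) ↔ x = u ∧ y = v := by
    rw [← mem_compl, ← mk_mem_interedges_iff, huv, mem_singleton, Prod.mk.injEq]
  obtain ⟨hu, hv, hadj⟩ := (mem_iff u v).mpr ⟨rfl, rfl⟩
  exact hbridge s(u, v) hadj <| isBridge_of_unique_boundary (S := S) hu hv
    fun x hx y hy hxy ↦ (mem_iff x y).mp ⟨hx, hy, hxy⟩

lemma three_le_card_interedges_compl (hbridge : ∀ e ∈ G.edgeSet, ¬G.IsBridge e) {S : Finset V}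
    (hdeg : ∀ v ∈ S, Odd (G.degree v)) (hS : Odd #S) : 3 ≤ #(G.interedges S Sᶜ) := by
  have hodd : Odd #(G.interedges S Sᶜ) := by
    rwa [odd_card_interedges_compl_iff, odd_sum_iff_odd_card_odd, filter_true_of_mem hdeg]
  have hne := card_interedges_compl_ne_one hbridge S
  grind

end Boundary

section ComponentVerts

variable {V : Type*} [Finite V] {G : SimpleGraph V}

/-- The vertex set of a connected component of a subgraph, as a finite set of vertices of the
ambient graph; Mathlib's `ConnectedComponent.supp` lives in the subtype of subgraph vertices. -/
noncomputable def componentVerts {H : G.Subgraph} (C : H.coe.ConnectedComponent) : Finset V :=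
  (Subtype.val '' C.supp).toFinite.toFinset

variable {H : G.Subgraph}

lemma mem_componentVerts {C : H.coe.ConnectedComponent} {x : V} :
    x ∈ componentVerts C ↔ ∃ h : x ∈ H.verts, H.coe.connectedComponentMk ⟨x, h⟩ = C := by
  simp [componentVerts]

lemma card_componentVerts (C : H.coe.ConnectedComponent) :
    #(componentVerts C) = C.supp.ncard := by
  rw [componentVerts, ← Set.ncard_eq_toFinset_card,
    Set.ncard_image_of_injective _ Subtype.val_injective]

lemma pairwise_disjoint_componentVerts :
    Pairwise (Function.onFun Disjoint (componentVerts (H := H))) := by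
  refine fun C D hCD ↦ Finset.disjoint_left.mpr fun x hxC hxD ↦ hCD ?_
  obtain ⟨_, hC⟩ := mem_componentVerts.mp hxC
  obtain ⟨_, hD⟩ := mem_componentVerts.mp hxD
  exact hC.symm.trans hD

end ComponentVerts

section PerfectMatching

variable {V : Type*} [Fintype V] {G : SimpleGraph V} [DecidableRel G.Adj]

lemma interedges_componentVerts_compl_subset [DecidableEq V] {H : G.Subgraph}
    (hH : H.IsInduced) {U : Finset V} (hU : H.vertsᶜ ⊆ U) (C : H.coe.ConnectedComponent) :
    G.interedges (componentVerts C) (componentVerts C)ᶜ ⊆ G.interedges (componentVerts C) U := by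
  rintro ⟨x, y⟩ hxy
  obtain ⟨hxC, hyC, hadj⟩ := G.mk_mem_interedges_iff.mp hxy
  refine G.mk_mem_interedges_iff.mpr ⟨hxC, hU fun hy ↦ ?_, hadj⟩
  obtain ⟨hx, rfl⟩ := mem_componentVerts.mp hxC
  have hHadj : H.coe.Adj ⟨y, hy⟩ ⟨x, hx⟩ := hH hy hx hadj.symm
  exact mem_compl.mp hyC (mem_componentVerts.mpr ⟨hy, ConnectedComponent.sound hHadj.reachable⟩)

theorem exists_isPerfectMatching_of_le_card_interedges_compl [DecidableEq V] {d : ℕ} (hd : 0 < d)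
    (hdeg : ∀ v, G.degree v ≤ d) (hcut : ∀ S : Finset V, Odd #S → d ≤ #(G.interedges S Sᶜ)) :
    ∃ M : G.Subgraph, M.IsPerfectMatching := by
  classical
  refine tutte.mpr fun u ↦ not_lt.mpr ?_
  set H := (⊤ : G.Subgraph).deleteVerts u
  have hinduced : H.IsInduced := fun _ hx _ hy hadj ↦ by simp [H, hadj, hx.2, hy.2]
  have hcompl : H.vertsᶜ ⊆ (u.toFinset : Set V) := by simp [H, Set.compl_eq_univ_sdiff]
  have hodd : ∀ C ∈ H.coe.oddComponents.toFinset,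
      d ≤ #(G.interedges (componentVerts C) u.toFinset) := fun C hC ↦
    (hcut _ (by simpa [card_componentVerts] using hC)).trans
      (card_le_card (interedges_componentVerts_compl_subset hinduced hcompl C))
  rw [Set.ncard_eq_toFinset_card', Set.ncard_eq_toFinset_card']
  refine Nat.le_of_mul_le_mul_right ?_ hd
  calc #H.coe.oddComponents.toFinset * d
    _ ≤ ∑ v ∈ u.toFinset, G.degree v :=
      card_mul_le_sum_degree_of_pairwiseDisjoint
        (pairwise_disjoint_componentVerts.set_pairwise _) hodd
    _ ≤ #u.toFinset * d := sum_le_card_nsmul _ _ _ fun v _ ↦ hdeg v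

/-- **Petersen's theorem**. -/
theorem exists_isPerfectMatching_of_bridgeless_cubic (hreg : G.IsRegularOfDegree 3)
    (hbridge : ∀ e ∈ G.edgeSet, ¬G.IsBridge e) : ∃ M : G.Subgraph, M.IsPerfectMatching := by
  classical
  exact exists_isPerfectMatching_of_le_card_interedges_compl three_pos (fun v ↦ (hreg v).le) fun _ ↦
    three_le_card_interedges_compl hbridge fun v _ ↦ hreg v ▸ by decide

end PerfectMatching

section Coloring

lemma exists_subsingleton_sdiff_of_encard_le_two {α : Type*} {s : Set α} (hs : s.encard ≤ 2) :
    ∃ t : Set α, t.Subsingleton ∧ (s \ t).Subsingleton := by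
  obtain rfl | ⟨a, ha⟩ := s.eq_empty_or_nonempty
  · exact ⟨∅, by simp⟩
  · refine ⟨{a}, Set.subsingleton_singleton, Set.encard_le_one_iff_subsingleton.mp ?_⟩
    rw [← Set.encard_sdiff_singleton_add_one ha, ← one_add_one_eq_two] at hs
    exact (ENat.add_le_add_iff_right ENat.one_ne_top).mp hs

lemma exists_injOn_natAbs_eq {α : Type*} {s : Set α} {m : α → ℕ}
    (hzero : {a ∈ s | m a = 0}.Subsingleton) (htwo : ∀ i ≠ 0, {a ∈ s | m a = i}.encard ≤ 2) :
    ∃ f : α → ℤ, (∀ a, (f a).natAbs = m a) ∧ s.InjOn f := by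
  classical
  have hsplit (i : ℕ) (hi : i ≠ 0) := exists_subsingleton_sdiff_of_encard_le_two (htwo i hi)
  choose! t ht hst using hsplit
  refine ⟨fun a ↦ if a ∈ t (m a) then m a else -m a, fun a ↦ by grind, fun a ha b hb hab ↦ ?_⟩
  have hm : m a = m b := by grind
  obtain hb0 | hb0 := eq_or_ne (m b) 0
  · exact hzero ⟨ha, hm.trans hb0⟩ ⟨hb, hb0⟩
  · by_cases hat : a ∈ t (m b)
    · exact ht _ hb0 hat (by grind)
    · exact hst _ hb0 ⟨⟨ha, hm⟩, hat⟩ ⟨⟨hb, rfl⟩, by grind⟩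

lemma natCast_natAbs_mem_Mset {n : ℕ} {a : ℤ} : (a.natAbs : ℤ) ∈ Mset n ↔ a ∈ Mset n := by
  simp only [Mset, Set.mem_ofPred_eq, Int.natAbs_natCast, Int.natCast_eq_zero,
    Int.natAbs_eq_zero]

variable {V : Type*}

lemma exists_signature_of_natAbs_eq (col : V → Sym2 V → ℤ)
    (hcol : ∀ v w, (col v s(v, w)).natAbs = (col w s(v, w)).natAbs) :
    ∃ σ : Sym2 V → ℤ, (∀ e, σ e = 1 ∨ σ e = -1) ∧
      ∀ v w, col v s(v, w) = -σ s(v, w) * col w s(v, w) := by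
  have hsign (e : Sym2 V) : ∃ ε : ℤ, (ε = 1 ∨ ε = -1) ∧
      ∀ v w, s(v, w) = e → col v e = -ε * col w e := by
    induction e with | _ v w
    obtain h | h := Int.natAbs_eq_natAbs_iff.mp (hcol v w)
    · exact ⟨-1, by simp, by grind⟩
    · exact ⟨1, by simp, by grind⟩
  choose σ hσ hcompat using hsign
  exact ⟨σ, hσ, fun v w ↦ hcompat _ v w rfl⟩

variable {G : SimpleGraph V}

theorem exists_signature_coloring_of_edge_labeling {n : ℕ} (m : Sym2 V → ℕ)
    (hm : ∀ e ∈ G.edgeSet, (m e : ℤ) ∈ Mset n)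
    (hzero : ∀ v, {e ∈ G.incidenceSet v | m e = 0}.Subsingleton)
    (htwo : ∀ v, ∀ i ≠ 0, {e ∈ G.incidenceSet v | m e = i}.encard ≤ 2) :
    ∃ σ : Sym2 V → ℤ, (∀ e ∈ G.edgeSet, σ e = 1 ∨ σ e = -1) ∧
      ∃ c : SColoring G σ n, c.Proper := by
  choose col hcol hinj using fun v ↦ exists_injOn_natAbs_eq (hzero v) (htwo v)
  obtain ⟨σ, hσ, hcompat⟩ :=
    exists_signature_of_natAbs_eq col fun v w ↦ (hcol v _).trans (hcol w _).symm
  refine ⟨σ, fun e _ ↦ hσ e, ⟨col, fun v w hvw ↦ ?_, fun v w _ ↦ hcompat v w⟩, ?_⟩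
  · exact natCast_natAbs_mem_Mset.mp (hcol v _ ▸ hm _ hvw)
  · exact fun v w x hw hx hwx h ↦ hwx <| Sym2.congr_right.mp <|
      hinj v (G.mk'_mem_incidenceSet_left_iff.mpr hw) (G.mk'_mem_incidenceSet_left_iff.mpr hx) h

lemma encard_incidenceSet (v : V) [Fintype (G.neighborSet v)] :
    (G.incidenceSet v).encard = G.degree v := by
  classical
  rw [← card_incidenceFinset_eq_degree, ← Set.encard_coe_eq_coe_finsetCard, coe_incidenceFinset]

lemma existsUnique_mem_incidenceSet_of_isMatching {M : G.Subgraph} (hM : M.IsMatching) {v : V}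
    (hv : v ∈ M.verts) : ∃! e, e ∈ G.incidenceSet v ∧ e ∈ M.edgeSet := by
  obtain ⟨w, hvw, hunique⟩ := hM hv
  refine ⟨s(v, w), ⟨G.mk'_mem_incidenceSet_left_iff.mpr hvw.adj_sub, hvw⟩, ?_⟩
  rintro e ⟨he, heM⟩
  obtain ⟨x, rfl⟩ := Sym2.mem_iff_exists.mp he.2
  rw [hunique x heM]

theorem exists_signature_three_colorable_of_isPerfectMatching [G.LocallyFinite]
    (hdeg : ∀ v, G.degree v ≤ 3) {M : G.Subgraph} (hM : M.IsPerfectMatching) :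
    ∃ σ : Sym2 V → ℤ, (∀ e ∈ G.edgeSet, σ e = 1 ∨ σ e = -1) ∧
      ∃ c : SColoring G σ 3, c.Proper := by
  classical
  have hunique (v : V) : ∃! e, e ∈ G.incidenceSet v ∧ e ∈ M.edgeSet :=
    existsUnique_mem_incidenceSet_of_isMatching hM.1 (hM.2 v)
  refine exists_signature_coloring_of_edge_labeling (fun e ↦ if e ∈ M.edgeSet then 0 else 1)
    (fun e _ ↦ ?_) (fun v ↦ ?_) (fun v i hi ↦ ?_)
  · simp only [Mset, Set.mem_ofPred_eq]
    split_ifs <;> decide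
  · rintro e ⟨he, heM⟩ f ⟨hf, hfM⟩
    exact (hunique v).unique ⟨he, by simpa using heM⟩ ⟨hf, by simpa using hfM⟩
  · obtain ⟨e, he, heM⟩ := (hunique v).exists
    have hsub : {f ∈ G.incidenceSet v | (if f ∈ M.edgeSet then 0 else 1) = i} ⊆
        G.incidenceSet v \ {e} := by
      rintro f ⟨hf, hfi⟩
      exact ⟨hf, by rintro rfl; simp [heM, hi.symm] at hfi⟩
    have hcard : (G.incidenceSet v \ {e}).encard + 1 ≤ 2 + 1 := by
      rw [Set.encard_sdiff_singleton_add_one he, encard_incidenceSet, two_add_one_eq_three]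
      exact_mod_cast hdeg v
    exact (Set.encard_le_encard hsub).trans
      ((ENat.add_le_add_iff_right ENat.one_ne_top).mp hcard)

end Coloring

theorem exists_signature_three_colorable_general {V : Type*} [Fintype V] (G : SimpleGraph V)
    [DecidableRel G.Adj] (hreg : ∀ v : V, G.degree v = 3)
    (hbridge : ∀ e ∈ G.edgeSet, ¬G.IsBridge e) :
    ∃ σ : Sym2 V → ℤ, (∀ e ∈ G.edgeSet, σ e = 1 ∨ σ e = -1) ∧
      ∃ c : SColoring G σ 3, c.Proper := by
  obtain ⟨M, hM⟩ := exists_isPerfectMatching_of_bridgeless_cubic hreg hbridge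
  exact exists_signature_three_colorable_of_isPerfectMatching (fun v ↦ (hreg v).le) hM

/-- Every finite connected isthmus-free `3`-regular simple graph carries some signature
for which the resulting signed graph is properly `3`-edge colorable. -/
theorem exists_signature_three_colorable {V : Type*} [Fintype V] (G : SimpleGraph V)
    [DecidableRel G.Adj] (hconn : G.Connected) (hreg : ∀ v : V, G.degree v = 3)
    (hbridge : ∀ e ∈ G.edgeSet, ¬G.IsBridge e) :
    ∃ σ : Sym2 V → ℤ, (∀ e ∈ G.edgeSet, σ e = 1 ∨ σ e = -1) ∧
      ∃ c : SColoring G σ 3, c.Proper :=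
  exists_signature_three_colorable_general G hreg hbridge
end
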